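/- arXiv:2307.01046 — 3 statements merged into one kernel-verified Lean document; each statement's English description precedes it below -/
import Mathlib

section
/- For every positive integer n, the rank over ℚ of the forest compatibility matrix F_n is at most the n-th Catalan number C_n. -/
noncomputable section

/-- The number of blocks of a partition of `β`, where the partition is
represented as the setoid (equivalence relation) whose classes are the blocks. -/
def nBlocks {β : Type*} (s : Setoid β) : ℕ := Nat.card (Quotient s)

/-- Two partitions `π` and `ρ` of a finite set are compatible if
`|π| + |ρ| = n + |π ⊔ ρ|`, where `n` is the size of the ground set and `⊔` is
the join in the lattice of partitions (gluing representative forests yields a forest). -/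
def Compatible {β : Type*} (s t : Setoid β) : Prop :=
  nBlocks s + nBlocks t = Nat.card β + nBlocks (s ⊔ t)

open scoped Classical in
/-- The forest compatibility matrix `F_β`, with rows and columns indexed by the
partitions of `β`: the entry at `(π, ρ)` is `1` if `π` and `ρ` are compatible and
`0` otherwise. -/
def FMat (β : Type*) : Matrix (Setoid β) (Setoid β) ℚ := fun s t =>
  if Compatible s t then 1 else 0

instance instFiniteSetoid {α : Type*} [Finite α] : Finite (Setoid α) :=
  Finite.of_injective (fun s : Setoid α => s.r) fun s t h => by cases s; cases t; congr

noncomputable instance {α : Type*} [Finite α] : Fintype (Setoid α) := Fintype.ofFinite _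

open scoped Classical in
/-- merge the blocks of x and y -/
def mrg {β : Type*} (s : Setoid β) (x y : β) : Setoid β :=
  Setoid.ker (fun z => if s z y then (Quotient.mk s x) else Quotient.mk s z)

theorem mrg_iff {β : Type*} (s : Setoid β) (x y u v : β) :
    mrg s x y u v ↔ s u v ∨ (s u x ∧ s y v) ∨ (s u y ∧ s x v) := by
  have hs : ∀ {p q : β}, s p q → s q p := fun h => s.symm h
  have ht : ∀ {p q r : β}, s p q → s q r → s p r := fun h k => s.trans h k
  have hq : ∀ p q : β, (Quotient.mk s p = Quotient.mk s q) ↔ s p q := fun p q => Quotient.eq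
  unfold mrg
  rw [Setoid.ker_def]
  split_ifs with h1 h2 h2 <;> simp only [hq]
  · exact ⟨fun _ => Or.inl (ht h1 (hs h2)), fun _ => trivial⟩
  · constructor
    · intro h; exact Or.inr (Or.inr ⟨h1, h⟩)
    · rintro (h | ⟨h, h'⟩ | ⟨h, h'⟩)
      · exact absurd (ht (hs h) h1) h2
      · exact absurd (hs h') h2
      · exact h'
  · constructor
    · intro h; exact Or.inr (Or.inl ⟨h, hs h2⟩)
    · rintro (h | ⟨h, h'⟩ | ⟨h, h'⟩)
      · exact absurd (ht h h2) h1
      · exact h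
      · exact absurd h h1
  · constructor
    · intro h; exact Or.inl h
    · rintro (h | ⟨h, h'⟩ | ⟨h, h'⟩)
      · exact h
      · exact absurd (hs h') h2
      · exact absurd h h1

theorem mrg_le_iff {β : Type*} (s t : Setoid β) (x y : β) :
    mrg s x y ≤ t ↔ s ≤ t ∧ t x y := by
  constructor
  · intro h
    refine ⟨fun {u v} huv => h ((mrg_iff s x y u v).2 (Or.inl huv)), h ((mrg_iff s x y x y).2 ?_)⟩
    exact Or.inr (Or.inl ⟨s.refl x, s.refl y⟩)
  · rintro ⟨h, hxy⟩ u v huv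
    rcases (mrg_iff s x y u v).1 huv with h1 | ⟨h1, h2⟩ | ⟨h1, h2⟩
    · exact h h1
    · exact t.trans (h h1) (t.trans hxy (h h2))
    · exact t.trans (h h1) (t.trans (t.symm hxy) (h h2))

theorem mrg_sup {β : Type*} (s r : Setoid β) (x y : β) :
    mrg s x y ⊔ r = mrg (s ⊔ r) x y := by
  apply eq_of_forall_ge_iff
  intro t
  simp only [sup_le_iff, mrg_le_iff]
  tauto

theorem mrg_self {β : Type*} (s : Setoid β) (x y : β) (h : s x y) : mrg s x y = s := by
  apply eq_of_forall_ge_iff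
  intro t
  rw [mrg_le_iff]
  exact ⟨fun h => h.1, fun k => ⟨k, k h⟩⟩

theorem nBlocks_mrg {β : Type*} [Finite β] (s : Setoid β) (x y : β) (h : ¬ s x y) :
    nBlocks (mrg s x y) + 1 = nBlocks s := by
  classical
  have hq : ∀ p q : β, (Quotient.mk s p = Quotient.mk s q) ↔ s p q := fun p q => Quotient.eq
  unfold nBlocks mrg
  rw [Nat.card_congr (Setoid.quotientKerEquivRange _)]
  have : Set.range (fun z => if s z y then (Quotient.mk s x) else Quotient.mk s z)
      = {Quotient.mk s y}ᶜ := by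
    ext q
    induction q using Quotient.inductionOn with | _ q =>
    simp only [Set.mem_range, Set.mem_compl_iff, Set.mem_singleton_iff, hq]
    constructor
    · rintro ⟨z, hz⟩ hqy
      split_ifs at hz with h1
      · exact h (s.trans ((hq _ _).1 hz) hqy)
      · exact h1 (s.trans ((hq _ _).1 hz) hqy)
    · intro hqy
      exact ⟨q, by simp [hqy]⟩
  rw [this, Nat.card_coe_set_eq]
  have := Set.ncard_add_ncard_compl ({Quotient.mk s y} : Set (Quotient s))
  rw [Set.ncard_singleton] at this
  omega

theorem nBlocks_mrg_ge {β : Type*} [Finite β] (s : Setoid β) (x y : β) :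
    nBlocks s ≤ nBlocks (mrg s x y) + 1 := by
  by_cases h : s x y
  · rw [mrg_self s x y h]; omega
  · rw [nBlocks_mrg s x y h]

theorem nullity {β : Type*} [Finite β] (s r : Setoid β) :
    nBlocks s + nBlocks r ≤ Nat.card β + nBlocks (s ⊔ r) := by
  have key : ∀ l : List (β × β), ∀ r : Setoid β,
      let s := l.foldr (fun p t => mrg t p.1 p.2) ⊥
      nBlocks s + nBlocks r ≤ Nat.card β + nBlocks (s ⊔ r) := by
    intro l
    induction l with
    | nil =>
      intro r
      have : nBlocks (⊥ : Setoid β) = Nat.card β :=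
        Nat.card_congr (Equiv.ofBijective (Quotient.mk (⊥ : Setoid β))
          ⟨fun a b h => Quotient.exact h, Quotient.mk_surjective⟩).symm
      simp [this]
    | cons p l ih =>
      intro r
      have := ih r
      simp only [List.foldr_cons] at this ⊢
      set s := l.foldr (fun p t => mrg t p.1 p.2) ⊥
      by_cases h : s p.1 p.2
      · rw [mrg_self _ _ _ h]; exact this
      · have h1 := nBlocks_mrg s _ _ h
        rw [mrg_sup]
        have h2 := nBlocks_mrg_ge (s ⊔ r) p.1 p.2
        omega
  have hle : ∀ l : List (β × β), ∀ t : Setoid β,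
      l.foldr (fun p t => mrg t p.1 p.2) ⊥ ≤ t ↔ ∀ p ∈ l, t p.1 p.2 := by
    intro l t
    induction l with
    | nil => simp
    | cons p l ih => simp only [List.foldr_cons, mrg_le_iff, ih, List.forall_mem_cons]; tauto
  obtain ⟨l, hl⟩ : ∃ l : List (β × β), ∀ p, p ∈ l ↔ s p.1 p.2 := by
    have := (Set.toFinite {p : β × β | s p.1 p.2})
    exact ⟨this.toFinset.toList, by simp⟩
  have : l.foldr (fun p t => mrg t p.1 p.2) ⊥ = s := by
    apply eq_of_forall_ge_iff
    intro t
    rw [hle]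
    constructor
    · intro h u v huv
      exact h (u, v) ((hl _).2 huv)
    · intro h p hp
      exact h ((hl p).1 hp)
  have k := key l r
  simpa [this] using k

theorem compat_mrg {β : Type*} [Finite β] (s r : Setoid β) (x y : β) (h : ¬ s x y) :
    Compatible (mrg s x y) r ↔ Compatible s r ∧ ¬ (s ⊔ r) x y := by
  unfold Compatible
  rw [mrg_sup]
  have h1 := nBlocks_mrg s x y h
  have h2 := nullity s r
  by_cases h3 : (s ⊔ r) x y
  · rw [mrg_self _ _ _ h3]
    simp only [h3, not_true, and_false, iff_false]
    omega
  · have := nBlocks_mrg _ x y h3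
    simp only [h3, not_false_eq_true, and_true]
    omega

theorem core (g : Prop → ℚ) (g1 : g True = 1) (g0 : g False = 0) (A B C D E G : Prop)
    (abc1 : A → D → B) (abc2 : A → B → D) (abc3 : B → D → A)
    (abd1 : A → E → C) (abd2 : A → C → E) (abd3 : C → E → A)
    (acd1 : B → G → C) (acd2 : B → C → G) (acd3 : C → G → B)
    (bcd1 : D → G → E) (bcd2 : D → E → G) (bcd3 : E → G → D) :
    g (¬D ∧ ¬(C ∨ A ∧ G ∨ B ∧ E)) =
    -g (¬B ∧ ¬(E ∨ A ∧ G ∨ D ∧ C)) - g (¬A ∧ ¬(G ∨ B ∧ E ∨ D ∧ C)) + g (¬D ∧ ¬(G ∨ D ∧ G ∨ E)) +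
            g (¬B ∧ ¬(G ∨ B ∧ G ∨ C)) +
          g (¬B ∧ ¬(A ∨ D ∨ B ∧ A)) +
        g (¬E ∧ ¬(A ∨ A ∧ E ∨ C ∧ True)) -
      g
        ((¬B ∧ ¬(E ∨ A ∧ G ∨ D ∧ C)) ∧
          ¬((A ∨ D ∨ B ∧ A) ∨ (A ∨ D ∨ B ∧ A) ∧ (E ∨ C ∧ D ∨ G ∧ A) ∨ (C ∨ G ∨ B ∧ C) ∧ (True ∨ A ∧ D ∨ D ∧ A))) := by
  by_cases hA : A <;> by_cases hB : B <;> by_cases hD : D <;>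
  first
  | exact absurd (abc1 hA hD) hB
  | exact absurd (abc2 hA hB) hD
  | exact absurd (abc3 hB hD) hA
  | (by_cases hC : C <;> by_cases hE : E <;>
     first
     | exact absurd (abd1 hA hE) hC
     | exact absurd (abd2 hA hC) hE
     | exact absurd (abd3 hC hE) hA
     | (by_cases hG : G <;>
        first
        | exact absurd (acd1 hB hG) hC
        | exact absurd (acd2 hB hC) hG
        | exact absurd (acd3 hC hG) hB
        | exact absurd (bcd1 hD hG) hE
        | exact absurd (bcd2 hD hE) hG
        | exact absurd (bcd3 hE hG) hD
        | (simp only [hA, hB, hC, hD, hE, hG, not_true_eq_false, not_false_eq_true, and_true,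
            true_and, and_false, false_and, or_true, true_or, or_false, false_or, g1, g0]
           try norm_num)))

theorem skein {β : Type*} [Finite β] (s : Setoid β) (a b c d : β)
    (hab : ¬ s a b) (hac : ¬ s a c) (had : ¬ s a d) (hbc : ¬ s b c) (hbd : ¬ s b d)
    (hcd : ¬ s c d) :
    FMat β (mrg (mrg s b c) a d) = 
      - FMat β (mrg (mrg s a c) b d) - FMat β (mrg (mrg s a b) c d)
      + FMat β (mrg (mrg s b c) c d) + FMat β (mrg (mrg s a c) c d)
      + FMat β (mrg (mrg s a c) a b) + FMat β (mrg (mrg s b d) a b)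
      - FMat β (mrg (mrg (mrg s a c) b d) a b) := by
  funext r
  have hs : ∀ {p q : β}, s p q ↔ s q p := ⟨fun h => s.symm h, fun h => s.symm h⟩
  have hba := hab; have hca := hac; have hda := had
  have hcb := hbc; have hdb := hbd; have hdc := hcd
  rw [hs] at hba hca hda hcb hdb hdc
  obtain ⟨g, hg, g1, g0⟩ : ∃ g : Prop → ℚ, (∀ s r : Setoid β, FMat β s r = g (Compatible s r)) ∧
      g True = 1 ∧ g False = 0 := by
    classical
    exact ⟨fun p => if p then 1 else 0, fun s r => by unfold FMat; split_ifs <;> simp [*], by simp, by simp⟩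
  simp only [Pi.add_apply, Pi.sub_apply, Pi.neg_apply, hg]
  have hr : ∀ p, s p p := fun p => s.refl p
  repeat rw [compat_mrg _ _ _ _ (by simp [mrg_iff, *])]
  have hm : ∀ (s : Setoid β) (x y u v : β), (mrg s x y ⊔ r) u v ↔
      (s ⊔ r) u v ∨ ((s ⊔ r) u x ∧ (s ⊔ r) y v) ∨ ((s ⊔ r) u y ∧ (s ⊔ r) x v) := by
    intro s x y u v
    rw [mrg_sup, mrg_iff]
  simp only [hm]
  generalize s ⊔ r = t
  have ts : ∀ {p q : β}, t p q → t q p := fun h => t.symm h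
  have tt : ∀ {p q r : β}, t p q → t q r → t p r := fun h k => t.trans h k
  have tr : ∀ p, t p p := fun p => t.refl p
  have e1 : t b a ↔ t a b := ⟨ts, ts⟩
  have e2 : t c a ↔ t a c := ⟨ts, ts⟩
  have e3 : t d a ↔ t a d := ⟨ts, ts⟩
  have e4 : t c b ↔ t b c := ⟨ts, ts⟩
  have e5 : t d b ↔ t b d := ⟨ts, ts⟩
  have e6 : t d c ↔ t c d := ⟨ts, ts⟩
  have abc1 : t a b → t b c → t a c := tt
  have abc2 : t a b → t a c → t b c := fun h k => tt (ts h) k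
  have abc3 : t a c → t b c → t a b := fun h k => tt h (ts k)
  have abd1 : t a b → t b d → t a d := tt
  have abd2 : t a b → t a d → t b d := fun h k => tt (ts h) k
  have abd3 : t a d → t b d → t a b := fun h k => tt h (ts k)
  have acd1 : t a c → t c d → t a d := tt
  have acd2 : t a c → t a d → t c d := fun h k => tt (ts h) k
  have acd3 : t a d → t c d → t a c := fun h k => tt h (ts k)
  have bcd1 : t b c → t c d → t b d := tt
  have bcd2 : t b c → t b d → t c d := fun h k => tt (ts h) k
  have bcd3 : t b d → t c d → t b c := fun h k => tt h (ts k)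
  simp only [e1, e2, e3, e4, e5, e6, tr]
  clear ts tt tr e1 e2 e3 e4 e5 e6 hs hr
  by_cases hC : Compatible s r
  · simp only [hC, true_and]
    clear hC
    generalize t a b = A at *
    generalize t a c = B at *
    generalize t a d = C at *
    generalize t b c = D at *
    generalize t b d = E at *
    generalize t c d = G at *
    clear hab hac had hbc hbd hcd hba hca hda hcb hdb hdc
    exact core g g1 g0 A B C D E G abc1 abc2 abc3 abd1 abd2 abd3 acd1 acd2 acd3 bcd1 bcd2 bcd3
  · simp [hC, g0]

open scoped Classical in
/-- isolate the point x -/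
def iso {β : Type*} (s : Setoid β) (x : β) : Setoid β where
  r u v := u = v ∨ (u ≠ x ∧ v ≠ x ∧ s u v)
  iseqv := by
    refine ⟨fun u => Or.inl rfl, ?_, ?_⟩
    · rintro u v (h | ⟨h1, h2, h3⟩)
      · exact Or.inl h.symm
      · exact Or.inr ⟨h2, h1, s.symm h3⟩
    · rintro u v w (rfl | ⟨h1, h2, h3⟩) (rfl | ⟨k1, k2, k3⟩)
      · exact Or.inl rfl
      · exact Or.inr ⟨k1, k2, k3⟩
      · exact Or.inr ⟨h1, h2, h3⟩
      · exact Or.inr ⟨h1, k2, s.trans h3 k3⟩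

theorem iso_iff {β : Type*} (s : Setoid β) (x u v : β) :
    iso s x u v ↔ u = v ∨ (u ≠ x ∧ v ≠ x ∧ s u v) := Iff.rfl

def NC {n : ℕ} (s : Setoid (Fin n)) : Prop :=
  ∀ x y z w : Fin n, x < y → y < z → z < w → s x z → s y w → s x y

theorem NC_iso {n : ℕ} (s : Setoid (Fin n)) (x : Fin n) (h : NC s) : NC (iso s x) := by
  intro p q r t h1 h2 h3 hx hy
  rw [iso_iff] at *
  rcases hx with hx | hx
  · omega
  rcases hy with hy | hy
  · omega
  exact Or.inr ⟨hx.1, hy.1, h p q r t h1 h2 h3 hx.2.2 hy.2.2⟩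

theorem NC_mrg {n : ℕ} (s : Setoid (Fin n)) (a b : Fin n) (hab : b.val = a.val + 1)
    (h : NC s) : NC (mrg s a b) := by
  intro p q r t h1 h2 h3 hx hy
  have hs : ∀ {p q}, s p q → s q p := fun h => s.symm h
  have ht : ∀ {p q r}, s p q → s q r → s p r := fun h k => s.trans h k
  have hr : ∀ p, s p p := fun p => s.refl p
  have adj : ∀ x, x = a ∨ x = b ∨ x < a ∨ b < x := by intro x; omega
  have hlt : a < b := by omega
  have lem : ∀ p q r t : Fin n, p < q → q < r → r < t → s p a → s b r → s q t →
      s q a ∨ s q b := by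
    intro p q r t h1 h2 h3 k1 k2 k3
    rcases adj q with rfl | rfl | hq | hq
    · exact Or.inl (hr _)
    · exact Or.inr (hr _)
    · rcases adj t with rfl | rfl | h5 | h5
      · exact Or.inl k3
      · exact Or.inr k3
      · exact Or.inr (ht (h q r t b h2 h3 (by omega) k3 (hs k2)) (hs k2))
      · exact Or.inl (ht (hs (h p q a t h1 hq (by omega) k1 k3)) k1)
    · exact Or.inr (hs (h b q r t hq h2 h3 k2 k3))
  have lem' : ∀ p q r t : Fin n, p < q → q < r → r < t → s p b → s a r → s q t →
      s q a ∨ s q b := by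
    intro p q r t h1 h2 h3 k1 k2 k3
    rcases adj q with rfl | rfl | hq | hq
    · exact Or.inl (hr _)
    · exact Or.inr (hr _)
    · rcases adj t with rfl | rfl | h5 | h5
      · exact Or.inl k3
      · exact Or.inr k3
      · exact Or.inl (ht (h q r t a h2 h3 (by omega) k3 (hs k2)) (hs k2))
      · exact Or.inr (ht (hs (h p q b t h1 (by omega) (by omega) k1 k3)) k1)
    · exact Or.inl (hs (h a q r t (by omega) h2 h3 k2 k3))
  have lem3 : ∀ p q r t : Fin n, p < q → q < r → r < t → s q a → s b t → s p r →
      s p a ∨ s p b := by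
    intro p q r t h1 h2 h3 k1 k2 k3
    rcases adj r with rfl | rfl | hq | hq
    · exact Or.inl k3
    · exact Or.inr k3
    · exact Or.inl (ht (h p q r a h1 h2 hq k3 k1) k1)
    · rcases adj p with rfl | rfl | h5 | h5
      · exact Or.inl (hr _)
      · exact Or.inr (hr _)
      · exact Or.inr (h p b r t (by omega) hq h3 k3 k2)
      · exact Or.inl (hs (h a p q r (by omega) h1 h2 (hs k1) k3))
  have lem4 : ∀ p q r t : Fin n, p < q → q < r → r < t → s q b → s a t → s p r →
      s p a ∨ s p b := by
    intro p q r t h1 h2 h3 k1 k2 k3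
    rcases adj r with rfl | rfl | hq | hq
    · exact Or.inl k3
    · exact Or.inr k3
    · exact Or.inr (ht (h p q r b h1 h2 (by omega) k3 k1) k1)
    · rcases adj p with rfl | rfl | h5 | h5
      · exact Or.inl (hr _)
      · exact Or.inr (hr _)
      · exact Or.inl (h p a r t (by omega) (by omega) h3 k3 k2)
      · exact Or.inr (hs (h b p q r (by omega) h1 h2 (hs k1) k3))
  have fin : (s p a ∨ s p b) → (s q a ∨ s q b) → mrg s a b p q := by
    rw [mrg_iff]
    rintro (k | k) (l | l)
    · exact Or.inl (ht k (hs l))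
    · exact Or.inr (Or.inl ⟨k, hs l⟩)
    · exact Or.inr (Or.inr ⟨k, hs l⟩)
    · exact Or.inl (ht k (hs l))
  rw [mrg_iff] at hx hy
  rcases hx with hx | ⟨hx1, hx2⟩ | ⟨hx1, hx2⟩ <;> rcases hy with hy | ⟨hy1, hy2⟩ | ⟨hy1, hy2⟩
  · rw [mrg_iff]; exact Or.inl (h p q r t h1 h2 h3 hx hy)
  · exact fin (lem3 p q r t h1 h2 h3 hy1 hy2 hx) (Or.inl hy1)
  · exact fin (lem4 p q r t h1 h2 h3 hy1 hy2 hx) (Or.inr hy1)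
  · exact fin (Or.inl hx1) (lem p q r t h1 h2 h3 hx1 hx2 hy)
  · exact fin (Or.inl hx1) (Or.inl hy1)
  · exact fin (Or.inl hx1) (Or.inr hy1)
  · exact fin (Or.inr hx1) (lem' p q r t h1 h2 h3 hx1 hx2 hy)
  · exact fin (Or.inr hx1) (Or.inl hy1)
  · exact fin (Or.inr hx1) (Or.inr hy1)

theorem NC_card (n : ℕ) : Nat.card {s : Setoid (Fin n) // NC s} ≤ catalan n := by
  induction n using Nat.strong_induction_on with | _ n ih =>
  rcases n with _ | n
  · simp only [catalan_zero]
    have : Subsingleton {s : Setoid (Fin 0) // NC s} :=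
      ⟨fun s t => Subtype.ext (Setoid.ext fun a => a.elim0)⟩
    exact Finite.card_le_one_iff_subsingleton.2 this
  · have hmax : ∀ s : Setoid (Fin (n + 1)), ∃ m, s 0 m ∧ ∀ k, s 0 k → k ≤ m := by
      intro s
      obtain ⟨m, hm, hm'⟩ := Set.exists_max_image {k | s 0 k} id (Set.toFinite _) ⟨0, s.refl 0⟩
      exact ⟨m, hm, hm'⟩
    choose M hM1 hM2 using hmax
    have hcomap : ∀ {k : ℕ} (f : Fin k → Fin (n+1)) (hf : StrictMono f) (s : Setoid (Fin (n+1))),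
        NC s → NC (Setoid.comap f s) := by
      intro k f hf s hs x y z w h1 h2 h3 hx hy
      exact hs _ _ _ _ (hf h1) (hf h2) (hf h3) hx hy
    let f1 : ∀ m : Fin (n+1), Fin m.val → Fin (n+1) := fun m i => ⟨i, by omega⟩
    let f2 : ∀ m : Fin (n+1), Fin (n - m.val) → Fin (n+1) := fun m i => ⟨m + 1 + i, by omega⟩
    have hf1 : ∀ m, StrictMono (f1 m) := fun m i j h => h
    have hf2 : ∀ m, StrictMono (f2 m) := fun m i j h => by
      have := Fin.lt_def.1 h
      rw [Fin.lt_def]; change m.val + 1 + i.val < m.val + 1 + j.val; omega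
    let Φ : {s : Setoid (Fin (n+1)) // NC s} →
      (Σ m : Fin (n+1), {s : Setoid (Fin m.val) // NC s} × {s : Setoid (Fin (n - m.val)) // NC s}) :=
      fun s => ⟨M s.1, ⟨_, hcomap (f1 (M s.1)) (hf1 _) s.1 s.2⟩,
        ⟨_, hcomap (f2 (M s.1)) (hf2 _) s.1 s.2⟩⟩
    have hΦ : Function.Injective Φ := by
      rintro ⟨s, hs⟩ ⟨t, ht⟩ h
      have hm : M s = M t := congrArg Sigma.fst h
      have key : ∀ m (s : Setoid (Fin (n+1))) (hs : NC s) , M s = m → ∀ x y, x < y → (s x y ↔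
          ((∃ i j, x = f1 m i ∧ y = f1 m j ∧ Setoid.comap (f1 m) s i j) ∨
          (∃ i j, x = f2 m i ∧ y = f2 m j ∧ Setoid.comap (f2 m) s i j) ∨
          (y = m ∧ ∃ i j, i.val = 0 ∧ x = f1 m j ∧ Setoid.comap (f1 m) s i j))) := by
        intro m s hs hMm x y hxy
        subst hMm
        have b1 := hM1 s
        have b2 := hM2 s
        generalize M s = m at b1 b2 ⊢
        constructor
        · intro h
          rcases lt_trichotomy y m with hy | hy | hy
          · exact Or.inl ⟨⟨x, by omega⟩, ⟨y, by omega⟩, rfl, rfl, h⟩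
          · refine Or.inr (Or.inr ⟨hy, ⟨0, by omega⟩, ⟨x, by omega⟩, rfl, rfl, ?_⟩)
            subst hy
            exact s.trans b1 (s.symm h)
          · rcases lt_or_ge m x with hx | hx
            · refine Or.inr (Or.inl ⟨⟨x - (m + 1), by omega⟩, ⟨y - (m + 1), by omega⟩, ?_, ?_, ?_⟩)
              · apply Fin.ext; simp only [f2]; omega
              · apply Fin.ext; simp only [f2]; omega
              · rw [Setoid.comap_rel]
                convert h using 1
                · apply Fin.ext; simp only [f2]; omega
                · apply Fin.ext; simp only [f2]; omega
            · exfalso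
              have h0x : ¬ s 0 x := fun k => absurd (b2 y (s.trans k h)) (not_le.2 hy)
              apply h0x
              rcases eq_or_lt_of_le hx with hx | hx
              · rw [hx]; exact b1
              rcases eq_or_lt_of_le (Fin.zero_le x) with hx' | hx'
              · rw [← hx']
              · exact hs 0 x m y hx' hx hy b1 h
        · rintro (⟨i, j, rfl, rfl, h⟩ | ⟨i, j, rfl, rfl, h⟩ | ⟨rfl, i, j, hi, rfl, h⟩)
          · exact h
          · exact h
          · rw [Setoid.comap_rel] at h
            have : f1 y i = 0 := Fin.ext hi
            rw [this] at h
            exact s.trans (s.symm h) b1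
      have hcs : ∀ m, M s = m → M t = m → Setoid.comap (f1 m) s = Setoid.comap (f1 m) t ∧
          Setoid.comap (f2 m) s = Setoid.comap (f2 m) t := by
        intro m h1 h2
        have h' := h
        simp only [Φ] at h'
        rw [h1, h2] at h'
        have h3 := Prod.mk.inj (eq_of_heq (Sigma.mk.inj_iff.1 h').2)
        exact ⟨congrArg Subtype.val h3.1, congrArg Subtype.val h3.2⟩
      obtain ⟨c1, c2⟩ := hcs _ hm rfl
      have hlt : ∀ x y, x < y → (s x y ↔ t x y) := by
        intro x y hxy
        rw [key _ s hs hm x y hxy, key _ t ht rfl x y hxy, c1, c2]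
      apply Subtype.ext
      ext x y
      rcases lt_trichotomy x y with hxy | rfl | hxy
      · exact hlt x y hxy
      · exact ⟨fun _ => t.refl x, fun _ => s.refl x⟩
      · exact ⟨fun h => t.symm ((hlt y x hxy).1 (s.symm h)),
          fun h => s.symm ((hlt y x hxy).2 (t.symm h))⟩
    refine (Nat.card_le_card_of_injective Φ hΦ).trans ?_
    rw [Nat.card_sigma, catalan_succ]
    refine Finset.sum_le_sum fun m _ => ?_
    rw [Nat.card_prod]
    exact Nat.mul_le_mul (ih _ (by omega)) (ih _ (by omega))

theorem nBlocks_comap {β : Type*} (σ : Equiv.Perm β) (s : Setoid β) :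
    nBlocks (Setoid.comap σ s) = nBlocks s :=
  Nat.card_congr (Quotient.congr σ (fun a b => Iff.rfl))

theorem comap_sup {β : Type*} (σ : Equiv.Perm β) (s t : Setoid β) :
    Setoid.comap σ (s ⊔ t) = Setoid.comap σ s ⊔ Setoid.comap σ t := by
  have h1 : ∀ (σ : Equiv.Perm β) (s t : Setoid β),
      Setoid.comap σ s ≤ t ↔ s ≤ Setoid.comap σ.symm t := by
    intro σ s t
    constructor
    · intro h x y hxy
      apply h
      simpa [Setoid.comap_rel] using hxy
    · intro h x y hxy
      have := h hxy
      simpa [Setoid.comap_rel] using this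
  apply eq_of_forall_ge_iff
  intro u
  simp only [h1, sup_le_iff]

theorem FMat_comap {β : Type*} (σ : Equiv.Perm β) (s t : Setoid β) :
    FMat β (Setoid.comap σ s) (Setoid.comap σ t) = FMat β s t := by
  have : Compatible (Setoid.comap σ s) (Setoid.comap σ t) ↔ Compatible s t := by
    unfold Compatible
    rw [← comap_sup]
    simp only [nBlocks_comap]
  unfold FMat
  by_cases h : Compatible s t
  · rw [if_pos h, if_pos (this.2 h)]
  · rw [if_neg h, if_neg (fun k => h (this.1 k))]

def S (n : ℕ) : Submodule ℚ (Setoid (Fin n) → ℚ) :=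
  Submodule.span ℚ (Set.range fun p : {s : Setoid (Fin n) // NC s} => FMat (Fin n) p.1)

theorem mem_S {n : ℕ} {s : Setoid (Fin n)} (h : NC s) : FMat (Fin n) s ∈ S n :=
  Submodule.subset_span ⟨⟨s, h⟩, rfl⟩

theorem swap_mem {n : ℕ} (a b : Fin n) (hab : b.val = a.val + 1) (s : Setoid (Fin n)) (h : NC s) :
    FMat (Fin n) (Setoid.comap (Equiv.swap a b) s) ∈ S n := by
  have hs : ∀ {p q}, s p q → s q p := fun h => s.symm h
  have ht : ∀ {p q r}, s p q → s q r → s p r := fun h k => s.trans h k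
  have hr : ∀ p, s p p := fun p => s.refl p
  have hne : a ≠ b := by intro h; rw [h] at hab; omega
  by_cases h0 : s a b
  · have : Setoid.comap (Equiv.swap a b) s = s := by
      ext u v
      rw [Setoid.comap_rel]
      simp only [Equiv.swap_apply_def]
      grind
    rw [this]; exact mem_S h
  by_cases h1 : ∃ c, c ≠ a ∧ s a c
  swap
  · have : Setoid.comap (Equiv.swap a b) s = iso (mrg s a b) b := by
      ext u v
      rw [Setoid.comap_rel]
      simp only [Equiv.swap_apply_def, iso_iff, mrg_iff]
      grind
    rw [this]; exact mem_S (NC_iso _ _ (NC_mrg _ _ _ hab h))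
  by_cases h2 : ∃ d, d ≠ b ∧ s b d
  swap
  · have : Setoid.comap (Equiv.swap a b) s = iso (mrg s a b) a := by
      ext u v
      rw [Setoid.comap_rel]
      simp only [Equiv.swap_apply_def, iso_iff, mrg_iff]
      grind
    rw [this]; exact mem_S (NC_iso _ _ (NC_mrg _ _ _ hab h))
  obtain ⟨c, hca, hc⟩ := h1
  obtain ⟨d, hdb, hd⟩ := h2
  have hcb : c ≠ b := by rintro rfl; exact h0 hc
  have hda : d ≠ a := by rintro rfl; exact h0 (hs hd)
  have hcd : ¬ s c d := fun k => h0 (ht hc (ht k (hs hd)))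
  have hcd' : c ≠ d := by rintro rfl; exact hcd (hr _)
  have e0 : Setoid.comap (Equiv.swap a b) s = mrg (mrg (iso (iso s a) b) b c) a d := by
    ext u v
    rw [Setoid.comap_rel]
    simp only [Equiv.swap_apply_def, iso_iff, mrg_iff]
    grind
  have e1 : mrg (mrg (iso (iso s a) b) a c) b d = s := by
    ext u v
    simp only [iso_iff, mrg_iff]
    grind (splits := 20)
  have e2 : mrg (mrg (iso (iso s a) b) a b) c d = mrg (iso (iso (mrg s a b) a) b) a b := by
    ext u v
    simp only [iso_iff, mrg_iff]
    clear e0 e1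
    grind (splits := 20)
  have e3 : mrg (mrg (iso (iso s a) b) b c) c d = iso (mrg s a b) a := by
    ext u v
    simp only [iso_iff, mrg_iff]
    clear e0 e1
    grind (splits := 20)
  have e4 : mrg (mrg (iso (iso s a) b) a c) c d = iso (mrg s a b) b := by
    ext u v
    simp only [iso_iff, mrg_iff]
    clear e0 e1
    grind (splits := 20)
  have e5 : mrg (mrg (iso (iso s a) b) a c) a b = mrg (iso s b) a b := by
    ext u v
    simp only [iso_iff, mrg_iff]
    clear e0 e1
    grind (splits := 20)
  have e6 : mrg (mrg (iso (iso s a) b) b d) a b = mrg (iso s a) a b := by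
    ext u v
    simp only [iso_iff, mrg_iff]
    clear e0 e1
    grind (splits := 20)
  rw [e0, skein, e1, e2, e3, e4, e5, e6]
  · have m := NC_mrg s a b hab h
    refine sub_mem (add_mem (add_mem (add_mem (add_mem (sub_mem (neg_mem ?_) ?_) ?_) ?_) ?_) ?_) ?_
    · exact mem_S h
    · exact mem_S (NC_mrg _ _ _ hab (NC_iso _ _ (NC_iso _ _ m)))
    · exact mem_S (NC_iso _ _ m)
    · exact mem_S (NC_iso _ _ m)
    · exact mem_S (NC_mrg _ _ _ hab (NC_iso _ _ h))
    · exact mem_S (NC_mrg _ _ _ hab (NC_iso _ _ h))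
    · exact mem_S m
  all_goals simp only [iso_iff]; grind

theorem perm_mem {n : ℕ} (σ : Equiv.Perm (Fin (n+1))) (s : Setoid (Fin (n+1)))
    (h : FMat (Fin (n+1)) s ∈ S (n+1)) :
    FMat (Fin (n+1)) (Setoid.comap σ s) ∈ S (n+1) := by
  let T : Equiv.Perm (Fin (n+1)) → (Setoid (Fin (n+1)) → ℚ) →ₗ[ℚ] (Setoid (Fin (n+1)) → ℚ) :=
    fun σ => LinearMap.funLeft ℚ ℚ (Setoid.comap σ.symm)
  have hT : ∀ σ s, T σ (FMat (Fin (n+1)) s) = FMat (Fin (n+1)) (Setoid.comap σ s) := by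
    intro σ s
    funext t
    have := FMat_comap σ s (Setoid.comap σ.symm t)
    have e : Setoid.comap σ (Setoid.comap σ.symm t) = t := by
      ext u v; simp [Setoid.comap_rel]
    rw [e] at this
    exact this.symm
  have hσ : σ ∈ Submonoid.closure (Set.range fun i : Fin n ↦ Equiv.swap i.castSucc i.succ) := by
    rw [Equiv.Perm.mclosure_swap_castSucc_succ]; trivial
  induction hσ using Submonoid.closure_induction generalizing s with
  | mem x hx =>
    obtain ⟨i, rfl⟩ := hx
    have hle : S (n+1) ≤ (S (n+1)).comap (T (Equiv.swap i.castSucc i.succ)) := by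
      conv_lhs => unfold S
      rw [Submodule.span_le]
      rintro _ ⟨p, rfl⟩
      simp only [SetLike.mem_coe, Submodule.mem_comap, hT]
      exact swap_mem _ _ (by simp) _ p.2
    have := hle h
    rw [Submodule.mem_comap, hT] at this
    exact this
  | one => exact h
  | mul x y hx hy ih1 ih2 =>
    have e : Setoid.comap (x * y : Equiv.Perm (Fin (n+1))) s = Setoid.comap y (Setoid.comap x s) := rfl
    rw [e]
    exact ih2 _ (ih1 _ h)

theorem all_mem {n : ℕ} (s : Setoid (Fin (n+1))) : FMat (Fin (n+1)) s ∈ S (n+1) := by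
  obtain ⟨k, ⟨e⟩⟩ := Finite.exists_equiv_fin (Quotient s)
  let f : Fin (n+1) → Fin k := fun x => e (Quotient.mk s x)
  have hf : ∀ x y, f x = f y ↔ s x y := fun x y => by
    simp only [f, EmbeddingLike.apply_eq_iff_eq]; exact Quotient.eq
  have hmono := Tuple.monotone_sort f
  set σ := Tuple.sort f
  have hNC : NC (Setoid.comap σ s) := by
    intro x y z w h1 h2 h3 hx hy
    rw [Setoid.comap_rel, ← hf] at *
    exact le_antisymm (hmono h1.le) ((hmono h2.le).trans hx.symm.le)
  have := perm_mem σ.symm _ (mem_S hNC)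
  have e : Setoid.comap σ.symm (Setoid.comap σ s) = s := by
    ext u v; simp [Setoid.comap_rel]
  rwa [e] at this

/-- For every positive integer `n`, the rank over `ℚ` of the forest compatibility
matrix `F_n` is at most the `n`-th Catalan number. -/
theorem rank_forestMatrix_le_catalan (n : ℕ) (hn : 0 < n) :
    (FMat (Fin n)).rank ≤ catalan n := by
  obtain ⟨n, rfl⟩ : ∃ k, n = k + 1 := ⟨n - 1, by omega⟩
  rw [Matrix.rank_eq_finrank_span_row]
  refine le_trans ?_ (NC_card (n+1))
  have : Submodule.span ℚ (Set.range (FMat (Fin (n+1))).row) ≤ S (n+1) := by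
    rw [Submodule.span_le]
    rintro _ ⟨s, rfl⟩
    exact all_mem s
  refine (Submodule.finrank_mono this).trans ?_
  have : Fintype {s : Setoid (Fin (n+1)) // NC s} := Fintype.ofFinite _
  rw [Nat.card_eq_fintype_card]
  exact finrank_range_le_card (R := ℚ) (fun p : {s : Setoid (Fin (n+1)) // NC s} => FMat (Fin (n+1)) p.1)
end
end

section
/- Fix a positive integer n and a linear order on Fin n. Every row of the forest compatibility matrix F_n is a ℚ-linear combination of the rows indexed by partitions of Fin n that are non-crossing with respect to that order; that is, the rows corresponding to non-crossing partitions span the row space of F_n. -/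
noncomputable section

/-- Two blocks `A` and `B` cross (with respect to a strict order `lt` on the
ground set) if there are `a1, a2 ∈ A` and `b1, b2 ∈ B` with
`a1 < b1 < a2 < b2` or `b1 < a1 < b2 < a2`. -/
def Crosses {α : Type*} (lt : α → α → Prop) (A B : Set α) : Prop :=
  ∃ a1 ∈ A, ∃ a2 ∈ A, ∃ b1 ∈ B, ∃ b2 ∈ B,
    (lt a1 b1 ∧ lt b1 a2 ∧ lt a2 b2) ∨ (lt b1 a1 ∧ lt a1 b2 ∧ lt b2 a2)

/-- A partition (given as a setoid) is non-crossing for the order `lt` if no two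
of its blocks (equivalence classes) cross. -/
def NonCrossingSetoid {α : Type*} (lt : α → α → Prop) (s : Setoid α) : Prop :=
  ∀ A ∈ s.classes, ∀ B ∈ s.classes, A ≠ B → ¬ Crosses lt A B

namespace FC

variable {α : Type*}

def NC (p : α → ℕ) (s : Setoid α) : Prop :=
  ∀ a b c d, p a < p b → p b < p c → p c < p d → s a c → s b d → s a b

/-- join the blocks of `x` and `y`. -/
def join (s : Setoid α) (x y : α) : Setoid α where
  r u v := s u v ∨ (s u x ∧ s y v) ∨ (s u y ∧ s x v)
  iseqv := by
    refine ⟨fun u => Or.inl (s.refl u), ?_, ?_⟩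
    · intro u v h
      rcases h with h | ⟨h, h'⟩ | ⟨h, h'⟩
      · exact Or.inl (s.symm h)
      · exact Or.inr (Or.inr ⟨s.symm h', s.symm h⟩)
      · exact Or.inr (Or.inl ⟨s.symm h', s.symm h⟩)
    · intro u v w h k
      have S : ∀ {a b}, s a b → s b a := fun h => s.symm h
      have T : ∀ {a b c}, s a b → s b c → s a c := fun h k => s.trans h k
      rcases h with h | ⟨h, h'⟩ | ⟨h, h'⟩ <;> rcases k with k | ⟨k, k'⟩ | ⟨k, k'⟩
      · exact Or.inl (T h k)
      · exact Or.inr (Or.inl ⟨T h k, k'⟩)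
      · exact Or.inr (Or.inr ⟨T h k, k'⟩)
      · exact Or.inr (Or.inl ⟨h, T h' k⟩)
      · exact Or.inr (Or.inl ⟨h, k'⟩)
      · exact Or.inl (T h k')
      · exact Or.inr (Or.inr ⟨h, T h' k⟩)
      · exact Or.inl (T h k')
      · exact Or.inr (Or.inr ⟨h, k'⟩)

theorem join_iff (s : Setoid α) (x y u v : α) :
    join s x y u v ↔ s u v ∨ (s u x ∧ s y v) ∨ (s u y ∧ s x v) := Iff.rfl

theorem le_join (s : Setoid α) (x y : α) : s ≤ join s x y := fun _ _ h => Or.inl h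

theorem join_le {s t : Setoid α} {x y : α} (h : s ≤ t) (hxy : t x y) : join s x y ≤ t := by
  intro u v k
  rcases k with k | ⟨k, k'⟩ | ⟨k, k'⟩
  · exact h k
  · exact t.trans (h k) (t.trans hxy (h k'))
  · exact t.trans (h k) (t.trans (t.symm hxy) (h k'))

theorem join_self (s : Setoid α) (x y : α) : join s x y x y :=
  Or.inr (Or.inl ⟨s.refl _, s.refl _⟩)

theorem join_sup (s t : Setoid α) (x y : α) : join s x y ⊔ t = join (s ⊔ t) x y := by
  apply le_antisymm
  · apply sup_le
    · exact join_le (le_sup_left.trans (le_join _ _ _)) (join_self _ _ _)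
    · exact le_sup_right.trans (le_join _ _ _)
  · apply join_le
    · exact sup_le_sup_right (le_join _ _ _) _
    · exact (le_sup_left : join s x y ≤ _) (join_self s x y)

theorem join_of_rel {s : Setoid α} {x y : α} (h : s x y) : join s x y = s :=
  le_antisymm (join_le le_rfl h) (le_join _ _ _)

theorem nBlocks_join [Finite α] {s : Setoid α} {x y : α} (h : ¬ s x y) :
    nBlocks (join s x y) + 1 = nBlocks s := by
  classical
  unfold nBlocks
  have e : Quotient (join s x y) ≃ {q : Quotient s // q ≠ Quotient.mk s y} := by
    refine Equiv.symm (Equiv.ofBijective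
      (fun q => Quotient.map' (s₁ := s) (s₂ := join s x y) id (fun _ _ h => Or.inl h) q.1) ⟨?_, ?_⟩)
    · rintro ⟨⟨u⟩, hu⟩ ⟨⟨v⟩, hv⟩ huv
      have hu' : ¬ s u y := fun k => hu (Quotient.sound k)
      have hv' : ¬ s v y := fun k => hv (Quotient.sound k)
      have k : join s x y u v := Quotient.exact huv
      apply Subtype.ext
      apply Quotient.sound
      rcases k with k | ⟨k, k'⟩ | ⟨k, k'⟩
      · exact k
      · exact absurd (s.symm k') hv'
      · exact absurd k hu'
    · rintro ⟨u⟩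
      by_cases hu : s u y
      · refine ⟨⟨Quotient.mk s x, fun k => h (Quotient.exact k)⟩, ?_⟩
        apply Quotient.sound
        exact Or.inr (Or.inl ⟨s.refl _, s.symm hu⟩)
      · refine ⟨⟨Quotient.mk s u, fun k => hu (Quotient.exact k)⟩, ?_⟩
        rfl
  rw [Nat.card_congr e]
  have := Fintype.ofFinite (Quotient s)
  simp only [Nat.card_eq_fintype_card, ne_eq, Fintype.card_subtype_compl, Fintype.card_unique]
  have : 0 < Fintype.card (Quotient s) := Fintype.card_pos_iff.2 ⟨Quotient.mk s y⟩
  omega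

theorem nBlocks_le [Finite α] (s t : Setoid α) :
    nBlocks s + nBlocks t ≤ Nat.card α + nBlocks (s ⊔ t) := by
  classical
  have := Fintype.ofFinite α
  have key : ∀ S : Finset (α × α), ∃ r : Setoid α, r = S.sup (fun q => join ⊥ q.1 q.2) ∧
      nBlocks r + nBlocks t ≤ Nat.card α + nBlocks (r ⊔ t) := by
    intro S
    induction S using Finset.induction_on with
    | empty =>
      refine ⟨⊥, by simp, ?_⟩
      have : nBlocks (⊥ : Setoid α) = Nat.card α :=
        Nat.card_congr (Equiv.ofBijective (fun a => Quotient.mk (⊥ : Setoid α) a)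
          ⟨fun a b h => Quotient.exact h, Quotient.mk_surjective⟩).symm
      rw [bot_sup_eq, this]
    | insert q S hq ih =>
      obtain ⟨r, hr, ih⟩ := ih
      refine ⟨join r q.1 q.2, ?_, ?_⟩
      · rw [Finset.sup_insert, ← hr, join_sup, bot_sup_eq]
      · rw [join_sup]
        by_cases h : r q.1 q.2
        · rw [join_of_rel h, join_of_rel]
          · exact ih
          · exact (le_sup_left : r ≤ r ⊔ t) h
        · have h1 := nBlocks_join h
          by_cases h' : (r ⊔ t) q.1 q.2
          · rw [join_of_rel h']; omega
          · have h2 := nBlocks_join h'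
            omega
  obtain ⟨r, hr, h⟩ := key (Finset.univ.filter (fun q => s q.1 q.2))
  have : r = s := by
    rw [hr]
    apply le_antisymm
    · apply Finset.sup_le
      intro q hq
      exact join_le bot_le (by simpa using hq)
    · intro u v huv
      have : join ⊥ (u, v).1 (u, v).2 ≤ (Finset.univ.filter (fun q : α × α => s q.1 q.2)).sup
          (fun q => join ⊥ q.1 q.2) :=
        Finset.le_sup (f := fun q : α × α => join (⊥ : Setoid α) q.1 q.2) (by simpa using huv)
      exact this (join_self _ _ _)
  rwa [this] at h

theorem compat_join [Finite α] {s : Setoid α} (t : Setoid α) {x y : α} (h : ¬ s x y) :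
    Compatible (join s x y) t ↔ Compatible s t ∧ ¬ (s ⊔ t) x y := by
  unfold Compatible
  rw [join_sup]
  have h1 := nBlocks_join h
  have h2 := nBlocks_le s t
  by_cases h' : (s ⊔ t) x y
  · rw [join_of_rel h']
    simp only [h', not_true, and_false, iff_false]
    omega
  · have h3 := nBlocks_join h'
    simp only [h', not_false_eq_true, and_true]
    omega

theorem compat_join2 [Finite α] {s : Setoid α} (t : Setoid α) {x y z w : α} (h : ¬ s x y)
    (h' : ¬ join s x y z w) :
    Compatible (join (join s x y) z w) t ↔
      Compatible s t ∧ ¬ (s ⊔ t) x y ∧ ¬ join (s ⊔ t) x y z w := by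
  rw [compat_join t h', compat_join t h, join_sup, and_assoc]

theorem compat_join3 [Finite α] {s : Setoid α} (t : Setoid α) {x y z w u v : α} (h : ¬ s x y)
    (h' : ¬ join s x y z w) (h'' : ¬ join (join s x y) z w u v) :
    Compatible (join (join (join s x y) z w) u v) t ↔
      Compatible s t ∧ ¬ (s ⊔ t) x y ∧ ¬ join (s ⊔ t) x y z w ∧
        ¬ join (join (s ⊔ t) x y) z w u v := by
  rw [compat_join t h'', compat_join2 t h h', join_sup, join_sup, and_assoc, and_assoc]

open scoped Classical in
def ind (P : Prop) : ℚ := if P then 1 else 0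

theorem ind_true : ind True = 1 := if_pos trivial
theorem ind_false : ind False = 0 := if_neg id
theorem FMat_eq (s t : Setoid α) : FMat α s t = ind (Compatible s t) := rfl


theorem skein [Finite α] (s : Setoid α) (a b c d : α) (hab : ¬ s a b) (hac : ¬ s a c)
    (had : ¬ s a d) (hbc : ¬ s b c) (hbd : ¬ s b d) (hcd : ¬ s c d) :
    FMat α (join (join s a c) b d) =
      FMat α (join (join s a c) a b) + FMat α (join (join s a c) a d)
      + FMat α (join (join s a b) a d) + FMat α (join (join s b c) b d)
      - FMat α (join (join (join s a c) a b) a d)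
      - FMat α (join (join s a b) c d) - FMat α (join (join s a d) b c) := by
  have S : ∀ {r : Setoid α} {a b}, r a b → r b a := fun {r} _ _ h => r.symm h
  have T : ∀ {r : Setoid α} {a b c}, r a b → r b c → r a c := fun {r} _ _ _ h k => r.trans h k
  have R : ∀ (r : Setoid α) a, r a a := fun r a => r.refl a
  funext t
  simp only [Pi.add_apply, Pi.sub_apply, FMat_eq]
  have cs : ∀ {r : Setoid α} {a b}, ¬ r a b → ¬ r b a := fun h k => h (S k)
  rw [compat_join2, compat_join2, compat_join2, compat_join2, compat_join2, compat_join3,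
    compat_join2, compat_join2]
  rotate_left 1
  all_goals try first | assumption | (simp only [join_iff]; grind)
  by_cases hc : Compatible s t
  swap
  · simp [hc, ind_false]
  generalize s ⊔ t = r
  have hs : ∀ u v, r u v ↔ r v u := fun u v => ⟨S, S⟩
  simp only [hc, true_and]
  simp only [join_iff]
  simp only [R, true_or, or_true, and_true]
  simp only [hs b a, hs c a, hs d a, hs c b, hs d b, hs d c]
  have t1 := @T r
  by_cases h1 : r a b <;> by_cases h2 : r a c <;> by_cases h3 : r a d <;>
    by_cases h4 : r b c <;> by_cases h5 : r b d <;> by_cases h6 : r c d <;>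
    first
    | (exfalso; grind)
    | (simp [h1, h2, h3, h4, h5, h6, ind_true, ind_false]; try norm_num)

/-- split by a set. -/
def split (t : Setoid α) (S : Set α) : Setoid α where
  r u v := t u v ∧ (u ∈ S ↔ v ∈ S)
  iseqv := ⟨fun u => ⟨t.refl u, Iff.rfl⟩, fun h => ⟨t.symm h.1, h.2.symm⟩,
    fun h k => ⟨t.trans h.1 k.1, h.2.trans k.2⟩⟩

theorem split_iff (t : Setoid α) (S : Set α) (u v : α) :
    split t S u v ↔ t u v ∧ (u ∈ S ↔ v ∈ S) := Iff.rfl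

theorem NC.split {p : α → ℕ} {t : Setoid α} (h : NC p t) {S : Set α}
    (hS : ∀ a b c, p a < p b → p b < p c → a ∈ S → c ∈ S → b ∈ S) : NC p (split t S) := by
  intro a b c d hab hbc hcd h1 h2
  refine ⟨h a b c d hab hbc hcd h1.1 h2.1, fun k => hS a b c hab hbc k (h1.2.1 k), fun k => ?_⟩
  exact h1.2.2 (hS b c d hbc hcd k (h2.2.1 k))

theorem NC.comap {p p' : α → ℕ} (hp' : Function.Injective p') {t : Setoid α} (h : NC p' t)
    (g : α → α) (hg : ∀ u v, p u < p v → p' (g u) ≤ p' (g v)) : NC p (Setoid.comap g t) := by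
  intro a b c d hab hbc hcd h1 h2
  have h1 : t (g a) (g c) := h1
  have h2 : t (g b) (g d) := h2
  change t (g a) (g b)
  rcases (hg _ _ hab).eq_or_lt with k1 | k1
  · rw [hp' k1]
  rcases (hg _ _ hbc).eq_or_lt with k2 | k2
  · rw [hp' k2]; exact h1
  rcases (hg _ _ hcd).eq_or_lt with k3 | k3
  · rw [hp' k3] at h1; exact t.trans h1 (t.symm h2)
  exact h _ _ _ _ k1 k2 k3 h1 h2

theorem NC.join {p : α → ℕ} (hp : Function.Injective p) {t : Setoid α} (h : NC p t)
    {x y : α} (hxy : p x = p y + 1) : NC p (join t x y) := by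
  have S : ∀ {a b}, t a b → t b a := fun h => t.symm h
  have T : ∀ {a b c}, t a b → t b c → t a c := fun h k => t.trans h k
  have K1 : ∀ z w, (z = x ∧ w = y ∨ z = y ∧ w = x) → ∀ a b c d, p a < p b → p b < p c →
      p c < p d → t a c → t b z → t w d → t a z ∨ t a w := by
    intro z w hzw a b c d hab hbc hcd h1 h2 h3
    by_cases e1 : p z = p a
    · rw [hp e1]; exact Or.inl (t.refl _)
    by_cases e2 : p z = p c
    · rw [hp e2]; exact Or.inl h1
    by_cases e3 : p w = p a
    · rw [hp e3]; exact Or.inr (t.refl _)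
    by_cases e4 : p w = p c
    · rw [hp e4]; exact Or.inr h1
    have hadj : p z = p w + 1 ∨ p w = p z + 1 := by
      rcases hzw with ⟨rfl, rfl⟩ | ⟨rfl, rfl⟩ <;> omega
    by_cases e5 : p a < p w ∧ p w < p c
    · exact Or.inr (h a w c d e5.1 e5.2 hcd h1 h3)
    by_cases e6 : p z < p a
    · exact Or.inl (S (h z a b c e6 hab hbc (S h2) h1))
    · exact Or.inl (T (h a b c z hab hbc (by omega) h1 h2) h2)
  have K2 : ∀ z w, (z = x ∧ w = y ∨ z = y ∧ w = x) → ∀ a b c d, p a < p b → p b < p c →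
      p c < p d → t b d → t a z → t w c → t b z ∨ t b w := by
    intro z w hzw a b c d hab hbc hcd h1 h2 h3
    by_cases e1 : p z = p b
    · rw [hp e1]; exact Or.inl (t.refl _)
    by_cases e2 : p z = p d
    · rw [hp e2]; exact Or.inl h1
    by_cases e3 : p w = p b
    · rw [hp e3]; exact Or.inr (t.refl _)
    by_cases e4 : p w = p d
    · rw [hp e4]; exact Or.inr h1
    have hadj : p z = p w + 1 ∨ p w = p z + 1 := by
      rcases hzw with ⟨rfl, rfl⟩ | ⟨rfl, rfl⟩ <;> omega
    by_cases e5 : p b < p z ∧ p z < p d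
    · exact Or.inl (T (S (h a b z d hab e5.1 e5.2 h2 h1)) h2)
    by_cases e6 : p w < p b
    · exact Or.inr (S (h w b c d e6 hbc hcd h3 h1))
    · exact Or.inr (T (h b c d w hbc hcd (by omega) h1 (S h3)) (S h3))
  intro a b c d hab hbc hcd h1 h2
  have k1 := K1 x y (by simp) a b c d hab hbc hcd
  have k2 := K1 y x (by simp) a b c d hab hbc hcd
  have k3 := K2 x y (by simp) a b c d hab hbc hcd
  have k4 := K2 y x (by simp) a b c d hab hbc hcd
  have k5 := h a b c d hab hbc hcd
  rw [join_iff] at *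
  clear h K1 K2
  have S1 := @S
  have T1 := @T
  grind

open scoped Classical in
theorem eqs (s : Setoid α) (x y c d : α) (hxy : ¬ s x y) (hc : c ≠ x) (hd : d ≠ y)
    (hxc : s x c) (hyd : s y d) (s0 : Setoid α) (hs0 : s0 = split (split s {x}) {y}) :
    join (join s0 x c) y d = s ∧
    join (join s0 x c) x y = Setoid.comap (fun u => if u = y then x else u) s ∧
    join (join s0 x c) x d = split (join s x y) {y} ∧
    join (join s0 x y) x d = Setoid.comap (fun u => if u = x then y else u) s ∧
    join (join s0 y c) y d = split (join s x y) {x} ∧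
    join (join (join s0 x c) x y) x d = join s x y ∧
    join (join s0 x y) c d = split (join s x y) {x, y} ∧
    join (join s0 x d) y c = Setoid.comap (Equiv.swap x y) s := by
  have S : ∀ {a b}, s a b → s b a := fun h => s.symm h
  have T : ∀ {a b c}, s a b → s b c → s a c := fun h k => s.trans h k
  have R : ∀ a, s a a := fun a => s.refl a
  have hs : ∀ u v, s u v ↔ s v u := fun u v => ⟨S, S⟩
  have hcx : ¬ s c y := fun k => hxy (T hxc k)
  have hdx : ¬ s d x := fun k => hxy (S (T hyd k))
  have hcd : ¬ s c d := fun k => hxy (T hxc (T k (S hyd)))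
  have n1 : x ≠ y := fun k => hxy (k ▸ R x)
  have n2 : c ≠ y := fun k => hcx (k ▸ R y)
  have n3 : d ≠ x := fun k => hdx (k ▸ R x)
  have n4 : c ≠ d := fun k => hcd (k ▸ R c)
  have e1 : ∀ u, s c u ↔ s x u := fun u => ⟨fun k => T hxc k, fun k => T (S hxc) k⟩
  have e2 : ∀ u, s d u ↔ s y u := fun u => ⟨fun k => T hyd k, fun k => T (S hyd) k⟩
  have e3 : ∀ u, s u c ↔ s x u := fun u => by rw [hs]; exact e1 u
  have e4 : ∀ u, s u d ↔ s y u := fun u => by rw [hs]; exact e2 u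
  have hyx : ¬ s y x := fun k => hxy (S k)
  subst hs0
  have hcm : ∀ (f : α → α) u v, Setoid.comap f s u v ↔ s (f u) (f v) := fun _ _ _ => Iff.rfl
  refine ⟨?_, ?_, ?_, ?_, ?_, ?_, ?_, ?_⟩
  all_goals
    ext u v
    have hux := hs u x
    have huy := hs u y
    have hvx := hs v x
    have hvy := hs v y
    have huv := @T x u v
    have huv2 := @T y u v
    have huv3 := @T x v u
    have huv4 := @T y v u
    have huv5 := hs u v
    have huv6 := @T u x v
    have huv7 := @T u y v
    have huv8 := @T x u y
    have huv9 := @T x v y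
    simp only [join_iff, split_iff, hcm, Set.mem_singleton_iff, Set.mem_insert_iff,
      Equiv.swap_apply_def, e1, e2, e3, e4]
    clear S T hs e1 e2 e3 e4 hcm
    by_cases hu1 : u = x
    · subst hu1
      by_cases hv1 : v = u
      · subst hv1; grind
      by_cases hv2 : v = y
      · subst hv2; grind
      grind
    by_cases hu2 : u = y
    · subst hu2
      by_cases hv1 : v = x
      · subst hv1; grind
      by_cases hv2 : v = u
      · subst hv2; grind
      grind
    by_cases hv1 : v = x
    · subst hv1; grind
    by_cases hv2 : v = y
    · subst hv2; grind
    grind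

theorem step [Finite α] {p : α → ℕ} (hp : Function.Injective p) {x y : α} (hxy : p y = p x + 1)
    [DecidableEq α] {s : Setoid α} (hs : NC (p ∘ Equiv.swap x y) s) :
    FMat α s ∈ Submodule.span ℚ (FMat α '' {r | NC p r}) := by
  have base : ∀ {r : Setoid α}, NC p r → FMat α r ∈ Submodule.span ℚ (FMat α '' {r | NC p r}) :=
    fun h => Submodule.subset_span ⟨_, h, rfl⟩
  have hp' : Function.Injective (p ∘ Equiv.swap x y) := hp.comp (Equiv.injective _)
  have nxy : x ≠ y := by rintro rfl; omega
  have S : ∀ {a b}, s a b → s b a := fun h => s.symm h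
  have T : ∀ {a b c}, s a b → s b c → s a c := fun h k => s.trans h k
  have hpx : ∀ u, p u = p x → u = x := fun u h => hp h
  have hpy : ∀ u, p u = p y → u = y := fun u h => hp h
  have g1 : NC p (Setoid.comap (fun u => if u = y then x else u) s) := by
    apply NC.comap hp' hs
    intro u v huv
    simp only [Function.comp, Equiv.swap_apply_def]
    have := hpx u; have := hpx v; have := hpy u; have := hpy v
    grind
  have g2 : NC p (Setoid.comap (fun u => if u = x then y else u) s) := by
    apply NC.comap hp' hs
    intro u v huv
    simp only [Function.comp, Equiv.swap_apply_def]
    have := hpx u; have := hpx v; have := hpy u; have := hpy v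
    grind
  have g3 : ∀ {r : Setoid α}, NC (p ∘ Equiv.swap x y) r →
      NC p (Setoid.comap (Equiv.swap x y) r) := by
    intro r hr
    apply NC.comap hp' hr
    intro u v huv
    simpa using huv.le
  have hm : NC p (join s x y) := by
    have h := g3 (NC.join hp' hs (x := x) (y := y) (by simpa using hxy))
    convert h using 1
    ext u v
    change join s x y u v ↔ join s x y (Equiv.swap x y u) (Equiv.swap x y v)
    have S' : ∀ {a b}, join s x y a b → join s x y b a := fun h => (join s x y).symm h
    have T' : ∀ {a b c}, join s x y a b → join s x y b c → join s x y a c :=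
      fun h k => (join s x y).trans h k
    have h1 : ∀ u, join s x y u (Equiv.swap x y u) := by
      intro u
      by_cases h : u = x
      · subst h; rw [Equiv.swap_apply_left]; exact join_self _ _ _
      by_cases h' : u = y
      · subst h'; rw [Equiv.swap_apply_right]; exact S' (join_self _ _ _)
      rw [Equiv.swap_apply_of_ne_of_ne h h']
    constructor
    · intro k
      exact T' (S' (h1 u)) (T' k (h1 v))
    · intro k
      exact T' (h1 u) (T' k (S' (h1 v)))
  have c1 : ∀ z : α, ∀ a b c, p a < p b → p b < p c → a ∈ ({z} : Set α) → c ∈ ({z} : Set α) →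
      b ∈ ({z} : Set α) := by
    intro z a b c h1 h2 h3 h4
    have h3 : a = z := h3
    have h4 : c = z := h4
    subst h3; subst h4; omega
  have c2 : ∀ a b c, p a < p b → p b < p c → a ∈ ({x, y} : Set α) → c ∈ ({x, y} : Set α) →
      b ∈ ({x, y} : Set α) := by
    rintro a b c h1 h2 (rfl | rfl) (rfl | rfl) <;> omega
  by_cases h1 : s x y
  · rw [join_of_rel h1] at hm
    exact base hm
  by_cases h2 : ∃ c, c ≠ x ∧ s x c
  swap
  · push Not at h2
    have h := g2.split (c1 x)
    apply base
    convert h using 1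
    ext u v
    change _ ↔ s (if u = x then y else u) (if v = x then y else v) ∧ (u = x ↔ v = x)
    have := h2 u; have := h2 v; have := @S u v
    have r1 : s x x := s.refl x
    have r2 : s y y := s.refl y
    clear h g1 g2 g3 hm c1 c2 base hs hp hp' hpx hpy
    by_cases hu : u = x <;> by_cases hv : v = x <;> simp only [hu, hv, if_true, if_false] <;> grind
  by_cases h3 : ∃ d, d ≠ y ∧ s y d
  swap
  · push Not at h3
    have h := g1.split (c1 y)
    apply base
    convert h using 1
    ext u v
    change _ ↔ s (if u = y then x else u) (if v = y then x else v) ∧ (u = y ↔ v = y)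
    have := h3 u; have := h3 v; have := @S u v
    have r1 : s x x := s.refl x
    have r2 : s y y := s.refl y
    clear h g1 g2 g3 hm c1 c2 base hs hp hp' hpx hpy
    by_cases hu : u = y <;> by_cases hv : v = y <;> simp only [hu, hv, if_true, if_false] <;> grind
  obtain ⟨c, hc, hxc⟩ := h2
  obtain ⟨d, hd, hyd⟩ := h3
  obtain ⟨E1, E2, E3, E4, E5, E6, E7, E8⟩ := eqs s x y c d h1 hc hd hxc hyd _ rfl
  have hcy : c ≠ y := by rintro rfl; exact h1 hxc
  have hdx : d ≠ x := by rintro rfl; exact h1 (S hyd)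
  have key := skein (split (split s {x}) {y}) x y c d
    (fun k => h1 k.1.1)
    (fun k => hc (k.1.2.1 rfl)) (fun k => hdx (k.1.2.1 rfl)) (fun k => hcy (k.2.1 rfl))
    (fun k => hd (k.2.1 rfl))
    (fun k => h1 (T hxc (T k.1.1 (S hyd))))
  rw [E6, E1, E2, E3, E4, E5, E7, E8] at key
  rw [key]
  refine Submodule.sub_mem _ (Submodule.sub_mem _ (Submodule.sub_mem _ (Submodule.add_mem _
    (Submodule.add_mem _ (Submodule.add_mem _ (base ?_) (base ?_)) (base ?_)) (base ?_))
    (base ?_)) (base ?_)) (base ?_)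
  · convert g1
  · exact hm.split (c1 y)
  · convert g2
  · exact hm.split (c1 x)
  · exact hm
  · exact hm.split c2
  · convert g3 hs

theorem perm_le [Finite α] {n : ℕ} (σ : Equiv.Perm (Fin (n + 1))) :
    ∀ (e : α ≃ Fin (n + 1)) (s : Setoid α), NC (fun a => (σ (e a) : ℕ)) s →
      FMat α s ∈ Submodule.span ℚ (FMat α '' {r | NC (fun a => (e a : ℕ)) r}) := by
  classical
  have hσ : σ ∈ Submonoid.closure
      (Set.range fun i : Fin n ↦ Equiv.swap i.castSucc i.succ) := by
    rw [Equiv.Perm.mclosure_swap_castSucc_succ]; trivial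
  induction hσ using Submonoid.closure_induction with
  | mem σ h =>
    obtain ⟨i, rfl⟩ := h
    intro e s hs
    apply step (p := fun a => (e a : ℕ)) (x := e.symm i.castSucc) (y := e.symm i.succ)
    · exact Fin.val_injective.comp e.injective
    · simp
    · convert hs using 1
      funext a
      simp only [Function.comp]
      simp only [Equiv.swap_apply_def, Equiv.eq_symm_apply]
      split_ifs <;> simp
  | one =>
    intro e s hs
    exact Submodule.subset_span ⟨s, hs, rfl⟩
  | mul σ τ _ _ h1 h2 =>
    intro e s hs
    have := h1 (e.trans τ) s hs
    refine Submodule.span_le.2 ?_ this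
    rintro _ ⟨r, hr, rfl⟩
    exact h2 e r hr

theorem exists_NC {n : ℕ} (s : Setoid (Fin n)) :
    ∃ σ : Equiv.Perm (Fin n), NC (fun a => (σ a : ℕ)) s := by
  classical
  let f : Fin n → Fin n := fun a => (Quotient.mk s a).out
  have hf : ∀ a b, f a = f b → s a b := fun a b h => by
    have : Quotient.mk s a = Quotient.mk s b := by
      rw [← Quotient.out_eq (Quotient.mk s a), ← Quotient.out_eq (Quotient.mk s b)]
      exact congrArg _ h
    exact Quotient.exact this
  have hf' : ∀ a b, s a b → f a = f b := fun a b h =>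
    congrArg Quotient.out (Quotient.sound h : Quotient.mk s a = Quotient.mk s b)
  have hm := Tuple.monotone_sort f
  refine ⟨(Tuple.sort f)⁻¹, ?_⟩
  intro a b c d hab hbc _ hac _
  have mono : ∀ u v, (((Tuple.sort f)⁻¹ u : Fin n) : ℕ) < ((Tuple.sort f)⁻¹ v : Fin n) →
      f u ≤ f v := by
    intro u v h
    have := hm (Fin.le_def.2 h.le)
    simpa using this
  apply hf
  exact le_antisymm (mono _ _ hab) ((mono _ _ hbc).trans (hf' _ _ hac).ge)

theorem nc_of [LinearOrder α] {n : ℕ} (e : α ≃o Fin n) (s : Setoid α)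
    (h : NC (fun a => (e a : ℕ)) s) : NonCrossingSetoid (· < ·) s := by
  have hlt : ∀ {a b : α}, a < b → (e a : ℕ) < e b := fun h => Fin.lt_def.1 (e.lt_iff_lt.2 h)
  rintro A ⟨u, rfl⟩ B ⟨v, rfl⟩ hAB ⟨a1, ha1, a2, ha2, b1, hb1, b2, hb2, hh⟩
  apply hAB
  have ha1 : s a1 u := ha1
  have ha2 : s a2 u := ha2
  have hb1 : s b1 v := hb1
  have hb2 : s b2 v := hb2
  have huv : s u v := by
    rcases hh with ⟨h1, h2, h3⟩ | ⟨h1, h2, h3⟩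
    · have := h _ _ _ _ (hlt h1) (hlt h2) (hlt h3) (s.trans ha1 (s.symm ha2))
        (s.trans hb1 (s.symm hb2))
      exact s.trans (s.symm ha1) (s.trans this hb1)
    · have := h _ _ _ _ (hlt h1) (hlt h2) (hlt h3) (s.trans hb1 (s.symm hb2))
        (s.trans ha1 (s.symm ha2))
      exact s.trans (s.symm ha1) (s.trans (s.symm this) hb1)
  ext w
  exact ⟨fun k => s.trans k huv, fun k => s.trans k (s.symm huv)⟩

theorem exists_iso' {n : ℕ} [LinearOrder α] [Fintype α] (hc : Fintype.card α = n) :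
    ∃ e : α ≃ Fin n, ∀ s : Setoid α, NC (fun a => (e a : ℕ)) s →
      NonCrossingSetoid (· < ·) s :=
  ⟨(Fintype.orderIsoFinOfCardEq α hc).symm.toEquiv, fun s h =>
    nc_of (Fintype.orderIsoFinOfCardEq α hc).symm s h⟩

theorem exists_iso {n : ℕ} (L : LinearOrder (Fin n)) :
    ∃ e : Fin n ≃ Fin n, ∀ s : Setoid (Fin n), NC (fun a => (e a : ℕ)) s →
      NonCrossingSetoid L.lt s :=
  @exists_iso' (Fin n) n L _ (Fintype.card_fin n)

end FC

/-- Fix `0 < n` and a linear order `L` on `Fin n`. Every row of the forest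
compatibility matrix `F_n` is a `ℚ`-linear combination of the rows indexed by
partitions of `Fin n` that are non-crossing with respect to `L`; that is, the
rows corresponding to non-crossing partitions span the row space of `F_n`. -/
theorem row_mem_span_noncrossing (n : ℕ) (hn : 0 < n) (L : LinearOrder (Fin n))
    (π : Setoid (Fin n)) :
    FMat (Fin n) π ∈ Submodule.span ℚ
      (FMat (Fin n) '' {ρ : Setoid (Fin n) | NonCrossingSetoid L.lt ρ}) := by
  obtain ⟨m, rfl⟩ : ∃ m, n = m + 1 := ⟨n - 1, by omega⟩
  obtain ⟨e, he⟩ := FC.exists_iso L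
  obtain ⟨σ, hσ⟩ := FC.exists_NC π
  have h := FC.perm_le (e.symm.trans σ) e π (by simpa using hσ)
  refine Submodule.span_mono ?_ h
  rintro _ ⟨r, hr, rfl⟩
  exact ⟨r, he r hr, rfl⟩
end
end

section
/- Let n be a positive integer, let p be a linear order on Fin n, let 1 ≤ i < n, and let p' be the linear order obtained from p by swapping the elements occupying the i-th and (i+1)-st positions of p. If π is a partition of Fin n that is non-crossing with respect to p, then the row F_n[π] of the forest compatibility matrix is a ℚ-linear combination of rows F_n[ρ] indexed by partitions ρ of Fin n that are non-crossing with respect to p'. -/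
noncomputable section

/-- A linear order on `Fin n` described by the bijection `p` sending each element
to its position: `x` comes before `y` iff the position of `x` is smaller. -/
def ltOfOrder {n : ℕ} (p : Fin n ≃ Fin n) : Fin n → Fin n → Prop :=
  fun x y => p x < p y

section Helpers
variable {α : Type*}

def mergeS (s : Setoid α) (x y : α) : Setoid α where
  r u v := s u v ∨ (s u x ∧ s y v) ∨ (s u y ∧ s x v)
  iseqv := by
    have hr := fun a => s.refl' a
    have hs := fun {a b} (h : s a b) => s.symm' h
    have ht := fun {a b c} (h : s a b) (h' : s b c) => s.trans' h h'
    refine ⟨fun a => Or.inl (hr a), ?_, ?_⟩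
    · rintro a b (h | ⟨h, h'⟩ | ⟨h, h'⟩)
      · exact Or.inl (hs h)
      · exact Or.inr (Or.inr ⟨hs h', hs h⟩)
      · exact Or.inr (Or.inl ⟨hs h', hs h⟩)
    · rintro a b c (h | ⟨h, h'⟩ | ⟨h, h'⟩) (k | ⟨k, k'⟩ | ⟨k, k'⟩)
      · exact Or.inl (ht h k)
      · exact Or.inr (Or.inl ⟨ht h k, k'⟩)
      · exact Or.inr (Or.inr ⟨ht h k, k'⟩)
      · exact Or.inr (Or.inl ⟨h, ht h' k⟩)
      · exact Or.inr (Or.inl ⟨h, k'⟩)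
      · exact Or.inl (ht h k')
      · exact Or.inr (Or.inr ⟨h, ht h' k⟩)
      · exact Or.inl (ht h k')
      · exact Or.inr (Or.inr ⟨h, k'⟩)

def isoS (s : Setoid α) (x : α) : Setoid α where
  r u v := u = v ∨ (s u v ∧ u ≠ x ∧ v ≠ x)
  iseqv := by
    have hs := fun {a b} (h : s a b) => s.symm' h
    have ht := fun {a b c} (h : s a b) (h' : s b c) => s.trans' h h'
    refine ⟨fun a => Or.inl rfl, ?_, ?_⟩
    · rintro a b (h | ⟨h, h1, h2⟩)
      · exact Or.inl h.symm
      · exact Or.inr ⟨hs h, h2, h1⟩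
    · rintro a b c (rfl | ⟨h, h1, h2⟩) (rfl | ⟨k, k1, k2⟩)
      · exact Or.inl rfl
      · exact Or.inr ⟨k, k1, k2⟩
      · exact Or.inr ⟨h, h1, h2⟩
      · exact Or.inr ⟨ht h k, h1, k2⟩

theorem mergeS_iff (s : Setoid α) (x y u v : α) :
    mergeS s x y u v ↔ (s u v ∨ (s u x ∧ s y v) ∨ (s u y ∧ s x v)) := Iff.rfl

theorem isoS_iff (s : Setoid α) (x u v : α) :
    isoS s x u v ↔ (u = v ∨ (s u v ∧ u ≠ x ∧ v ≠ x)) := Iff.rfl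

theorem mergeS_le (s r : Setoid α) (x y : α) : mergeS s x y ≤ r ↔ s ≤ r ∧ r x y := by
  constructor
  · intro h
    exact ⟨fun u v k => h (Or.inl k), h (Or.inr (Or.inl ⟨s.refl' x, s.refl' y⟩))⟩
  · rintro ⟨h, k⟩ u v (m | ⟨m, m'⟩ | ⟨m, m'⟩)
    · exact h m
    · exact r.trans' (h m) (r.trans' k (h m'))
    · exact r.trans' (h m) (r.trans' (r.symm' k) (h m'))

theorem mergeS_sup (s t : Setoid α) (x y : α) : mergeS s x y ⊔ t = mergeS (s ⊔ t) x y := by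
  have h0 := (mergeS_le s _ x y).1 le_rfl
  have h1 := (mergeS_le (s ⊔ t) _ x y).1 le_rfl
  apply le_antisymm
  · refine sup_le ((mergeS_le _ _ _ _).2 ⟨le_sup_left.trans h1.1, h1.2⟩) (le_sup_right.trans h1.1)
  · refine (mergeS_le _ _ _ _).2 ⟨sup_le (h0.1.trans le_sup_left) le_sup_right, ?_⟩
    exact (le_sup_left : mergeS s x y ≤ mergeS s x y ⊔ t) h0.2

theorem mergeS_sup_iff (s t : Setoid α) (x y u v : α) :
    (mergeS s x y ⊔ t) u v ↔ mergeS (s ⊔ t) x y u v := by rw [mergeS_sup]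

theorem mergeS_self (s : Setoid α) (x y : α) (h : s x y) : mergeS s x y = s :=
  le_antisymm ((mergeS_le _ _ _ _).2 ⟨le_rfl, h⟩) ((mergeS_le s _ x y).1 le_rfl).1

theorem nBlocks_mergeS [Finite α] (s : Setoid α) (x y : α) (h : ¬ s x y) :
    nBlocks (mergeS s x y) + 1 = nBlocks s := by
  classical
  have hle : s ≤ mergeS s x y := ((mergeS_le s _ x y).1 le_rfl).1
  let f : {q : Quotient s // q ≠ Quotient.mk s x} → Quotient (mergeS s x y) :=
    fun q => Quotient.map' (s₂ := mergeS s x y) id (fun a b hab => hle hab) q.1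
  have hf : Function.Bijective f := by
    constructor
    · rintro ⟨q, hq⟩ ⟨q', hq'⟩ hh
      induction q using Quotient.inductionOn with | _ u =>
      induction q' using Quotient.inductionOn with | _ v =>
      have hu : ¬ s u x := fun k => hq (Quotient.sound k)
      have hv : ¬ s v x := fun k => hq' (Quotient.sound k)
      have : mergeS s x y u v := Quotient.exact hh
      rcases this with k | ⟨k, k'⟩ | ⟨k, k'⟩
      · exact Subtype.ext (Quotient.sound k)
      · exact absurd k hu
      · exact absurd (s.symm' k') hv
    · intro q
      induction q using Quotient.inductionOn with | _ u =>
      by_cases hu : s u x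
      · refine ⟨⟨Quotient.mk s y, fun k => h (s.symm' (Quotient.exact k))⟩, ?_⟩
        exact Quotient.sound (Or.inr (Or.inr ⟨s.refl' y, s.symm' hu⟩))
      · exact ⟨⟨Quotient.mk s u, fun k => hu (Quotient.exact k)⟩, rfl⟩
  have := Nat.card_eq_of_bijective f hf
  unfold nBlocks
  rw [← this]
  have e := Nat.card_congr (Equiv.optionSubtypeNe (Quotient.mk s x))
  rw [← e, Finite.card_option]

theorem nBlocks_ineq [Finite α] (s t : Setoid α) :
    nBlocks s + nBlocks t ≤ Nat.card α + nBlocks (s ⊔ t) := by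
  let P : Set (Setoid α) := {r | r ≤ s ∧ nBlocks r + nBlocks t ≤ Nat.card α + nBlocks (r ⊔ t)}
  have : Finite (Setoid α) := Finite.of_injective (fun s : Setoid α => fun a b => s a b)
    (fun s t h => Setoid.ext fun a b => by
      have := congrFun (congrFun h a) b
      exact iff_of_eq this)
  have hbot : (⊥ : Setoid α) ∈ P := by
    refine ⟨bot_le, ?_⟩
    rw [bot_sup_eq]
    have : nBlocks (⊥ : Setoid α) ≤ Nat.card α :=
      Nat.card_le_card_of_surjective (Quotient.mk _) Quotient.mk_surjective
    omega
  obtain ⟨r, hr⟩ := (Set.toFinite P).exists_maximal ⟨_, hbot⟩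
  have hrs : r = s := by
    by_contra hne
    have : ∃ u v, s u v ∧ ¬ r u v := by
      by_contra! hcon
      exact hne (le_antisymm hr.1.1 (fun u v k => hcon u v k))
    obtain ⟨u, v, h1, h2⟩ := this
    have hm : mergeS r u v ∈ P := by
      refine ⟨(mergeS_le _ _ _ _).2 ⟨hr.1.1, h1⟩, ?_⟩
      have := hr.1.2
      have e := nBlocks_mergeS r u v h2
      rw [mergeS_sup]
      by_cases h3 : (r ⊔ t) u v
      · rw [mergeS_self _ _ _ h3]; omega
      · have := nBlocks_mergeS _ u v h3
        omega
    have k := (mergeS_le r _ u v).1 le_rfl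
    exact h2 (hr.2 hm k.1 (((mergeS_le r _ u v).1 le_rfl).2))
  rw [← hrs]; exact hr.1.2

theorem compatible_mergeS [Finite α] (s t : Setoid α) (x y : α) (h : ¬ s x y) :
    Compatible (mergeS s x y) t ↔ Compatible s t ∧ ¬ (s ⊔ t) x y := by
  unfold Compatible
  have h1 := nBlocks_mergeS s x y h
  have h2 := nBlocks_ineq s t
  rw [mergeS_sup]
  by_cases h3 : (s ⊔ t) x y
  · rw [mergeS_self _ _ _ h3]
    simp only [h3, not_true, and_false, iff_false]; omega
  · have := nBlocks_mergeS _ x y h3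
    simp only [h3, not_false_eq_true, and_true]; omega

/-- chain form of non-crossing -/
def NCq (q : α → ℕ) (s : Setoid α) : Prop :=
  ∀ a b c d, q a < q b → q b < q c → q c < q d → s a c → s b d → s a b

theorem NCq_iso (q : α → ℕ) (s : Setoid α) (x : α) (h : NCq q s) : NCq q (isoS s x) := by
  intro a b c d h1 h2 h3 h4 h5
  rcases h4 with rfl | ⟨h4, h6, h7⟩
  · omega
  rcases h5 with rfl | ⟨h5, h8, h9⟩
  · omega
  exact Or.inr ⟨h _ _ _ _ h1 h2 h3 h4 h5, h6, h8⟩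

theorem NCq_inout (q : α → ℕ) (s : Setoid α) (h : NCq q s) (a b c d : α)
    (hab : q a < q b) (hbc : q b < q c) (hd : q d < q a ∨ q c < q d) (h1 : s a c) (h2 : s b d) :
    s a b := by
  rcases hd with hd | hd
  · have := h d a b c hd hab hbc (s.symm' h2) h1
    exact s.symm' (s.trans' h2 this)
  · exact h a b c d hab hbc hd h1 h2

theorem NCq_aux (q : α → ℕ) (hq : Function.Injective q) (s : Setoid α) (h : NCq q s) (x y : α)
    (hxy : q y = q x + 1 ∨ q x = q y + 1) (a b c d : α)
    (hab : q a < q b) (hbc : q b < q c) (hd : q d < q a ∨ q c < q d) (h1 : s a c)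
    (h2 : s b x) (h3 : s y d) : s a b ∨ (s a y ∧ s x b) := by
  by_cases hx : q x < q a ∨ q c < q x
  · exact Or.inl (NCq_inout q s h a b c x hab hbc hx h1 h2)
  by_cases hxa : q x = q a
  · have := hq hxa; subst this; exact Or.inl (s.symm' h2)
  by_cases hxc : q x = q c
  · have := hq hxc; subst this; exact Or.inl (s.trans' h1 (s.symm' h2))
  right
  refine ⟨?_, s.symm' h2⟩
  by_cases hya : q y = q a
  · have := hq hya; subst this; exact s.refl' _
  by_cases hyc : q y = q c
  · have := hq hyc; subst this; exact h1
  exact NCq_inout q s h a y c d (by omega) (by omega) hd h1 h3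

theorem NCq_merge (q : α → ℕ) (hq : Function.Injective q) (s : Setoid α) (h : NCq q s) (x y : α)
    (hxy : q y = q x + 1) : NCq q (mergeS s x y) := by
  intro a b c d h1 h2 h3 h4 h5
  have hs := fun {a b} (h : s a b) => s.symm' h
  have ht := fun {a b c} (h : s a b) (h' : s b c) => s.trans' h h'
  rcases h4 with h4 | ⟨h4, h4'⟩ | ⟨h4, h4'⟩
  · rcases h5 with h5 | ⟨h5, h5'⟩ | ⟨h5, h5'⟩
    · exact Or.inl (h _ _ _ _ h1 h2 h3 h4 h5)
    · rcases NCq_aux q hq s h x y (Or.inl hxy) a b c d h1 h2 (Or.inr h3) h4 h5 h5' with k | k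
      · exact Or.inl k
      · exact Or.inr (Or.inr k)
    · rcases NCq_aux q hq s h y x (Or.inr hxy) a b c d h1 h2 (Or.inr h3) h4 h5 h5' with k | k
      · exact Or.inl k
      · exact Or.inr (Or.inl k)
  · rcases h5 with h5 | ⟨h5, h5'⟩ | ⟨h5, h5'⟩
    · rcases NCq_aux q hq s h y x (Or.inr hxy) b c d a h2 h3 (Or.inl h1) h5 (hs h4') (hs h4) with
        k | k
      · exact Or.inr (Or.inl ⟨h4, ht h4' (hs k)⟩)
      · exact Or.inl (ht h4 (hs k.1))
    · exact Or.inl (ht h4 (hs h5))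
    · exact Or.inr (Or.inl ⟨h4, hs h5⟩)
  · rcases h5 with h5 | ⟨h5, h5'⟩ | ⟨h5, h5'⟩
    · rcases NCq_aux q hq s h x y (Or.inl hxy) b c d a h2 h3 (Or.inl h1) h5 (hs h4') (hs h4) with
        k | k
      · exact Or.inr (Or.inr ⟨h4, ht h4' (hs k)⟩)
      · exact Or.inl (ht h4 (hs k.1))
    · exact Or.inr (Or.inr ⟨h4, hs h5⟩)
    · exact Or.inl (ht h4 (hs h5))

theorem NCq_swap (q : α → ℕ) (s : Setoid α) (h : NCq q s) (σ : α → α)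
    (hσ : ∀ z, s (σ z) z) : NCq (fun z => q (σ z)) s := by
  intro a b c d h1 h2 h3 h4 h5
  have := h _ _ _ _ h1 h2 h3 (s.trans' (hσ a) (s.trans' h4 (s.symm' (hσ c))))
    (s.trans' (hσ b) (s.trans' h5 (s.symm' (hσ d))))
  exact s.trans' (s.symm' (hσ a)) (s.trans' this (hσ b))

theorem NCq_comap (q : α → ℕ) (s : Setoid α) (h : NCq q s) (σ : α → α) :
    NCq (fun z => q (σ z)) (s.comap σ) := by
  intro a b c d h1 h2 h3 h4 h5
  exact h _ _ _ _ h1 h2 h3 h4 h5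

theorem NC_iff {n : ℕ} (p : Fin n ≃ Fin n) (s : Setoid (Fin n)) :
    NonCrossingSetoid (ltOfOrder p) s ↔ NCq (fun z => (p z : ℕ)) s := by
  constructor
  · intro h a b c d h1 h2 h3 h4 h5
    by_contra hab
    refine h {z | s z a} ⟨a, rfl⟩ {z | s z b} ⟨b, rfl⟩ ?_ ?_
    · intro he
      have : a ∈ {z | s z a} := s.refl' a
      rw [he] at this
      exact hab this
    · exact ⟨a, s.refl' a, c, s.symm' h4, b, s.refl' b, d, s.symm' h5, Or.inl ⟨h1, h2, h3⟩⟩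
  · rintro h _ ⟨u, rfl⟩ _ ⟨v, rfl⟩ hne ⟨a1, ha1, a2, ha2, b1, hb1, b2, hb2, hh⟩
    have ha1 : s a1 u := ha1
    have ha2 : s a2 u := ha2
    have hb1 : s b1 v := hb1
    have hb2 : s b2 v := hb2
    have key : s a1 b1 := by
      rcases hh with ⟨h1, h2, h3⟩ | ⟨h1, h2, h3⟩
      · exact h a1 b1 a2 b2 h1 h2 h3 (s.trans' ha1 (s.symm' ha2)) (s.trans' hb1 (s.symm' hb2))
      · exact s.symm' (h b1 a1 b2 a2 h1 h2 h3 (s.trans' hb1 (s.symm' hb2))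
          (s.trans' ha1 (s.symm' ha2)))
    have huv : s u v := s.trans' (s.symm' ha1) (s.trans' key hb1)
    apply hne
    ext z
    exact ⟨fun k => s.trans' k huv, fun k => s.trans' k (s.symm' huv)⟩

open scoped Classical in
def indQ (P : Prop) : ℚ := if P then 1 else 0

theorem FMat_ind (s t : Setoid α) : FMat α s t = indQ (Compatible s t) := rfl

theorem indQ_true : indQ True = 1 := by simp [indQ]

theorem indQ_false : indQ False = 0 := by simp [indQ]

/-- The four-term relation. -/
theorem FMat_relation [Finite α] (τ : Setoid α) (x y a b : α)
    (hxy : ¬ τ x y) (hxa : ¬ τ x a) (hxb : ¬ τ x b) (hya : ¬ τ y a) (hyb : ¬ τ y b)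
    (hab : ¬ τ a b) :
    FMat α (mergeS (mergeS τ x a) y b) =
      - FMat α (mergeS (mergeS τ x b) y a) - FMat α (mergeS (mergeS τ a b) x y)
      + FMat α (mergeS (mergeS τ x a) a b) + FMat α (mergeS (mergeS τ y b) a b)
      + FMat α (mergeS (mergeS τ x a) x y) + FMat α (mergeS (mergeS τ y b) x y)
      - FMat α (mergeS (mergeS (mergeS τ x a) y b) x y) := by
  have hs := fun a b => (⟨τ.symm', τ.symm'⟩ : τ a b ↔ τ b a)
  have hr := fun a => τ.refl' a
  funext t
  simp only [Pi.add_apply, Pi.sub_apply, Pi.neg_apply, FMat_ind]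
  have n1 : ¬ mergeS τ x a y b := by rw [mergeS_iff]; grind
  have n2 : ¬ mergeS τ x b y a := by rw [mergeS_iff]; grind
  have n3 : ¬ mergeS τ a b x y := by rw [mergeS_iff]; grind
  have n4 : ¬ mergeS τ x a a b := by rw [mergeS_iff]; grind
  have n5 : ¬ mergeS τ y b a b := by rw [mergeS_iff]; grind
  have n6 : ¬ mergeS τ x a x y := by rw [mergeS_iff]; grind
  have n7 : ¬ mergeS τ y b x y := by rw [mergeS_iff]; grind
  have n8 : ¬ mergeS (mergeS τ x a) y b x y := by
    simp only [mergeS_iff]; grind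
  simp only [compatible_mergeS _ t _ _ n1, compatible_mergeS _ t _ _ n2,
    compatible_mergeS _ t _ _ n3, compatible_mergeS _ t _ _ n4, compatible_mergeS _ t _ _ n5,
    compatible_mergeS _ t _ _ n6, compatible_mergeS _ t _ _ n7, compatible_mergeS _ t _ _ n8,
    compatible_mergeS _ t _ _ hxa, compatible_mergeS _ t _ _ hxb,
    compatible_mergeS _ t _ _ hyb, compatible_mergeS _ t _ _ hab, mergeS_sup_iff, mergeS_iff]
  by_cases hC : Compatible τ t
  swap
  · simp [hC, indQ_false]
  simp only [hC, true_and]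
  generalize τ ⊔ t = R
  have rs := fun a b => (⟨R.symm', R.symm'⟩ : R a b ↔ R b a)
  have rt := fun {a b c} (h : R a b) (h' : R b c) => R.trans' h h'
  have rr := fun a => R.refl' a
  simp only [rs y x, rs a x, rs b x, rs a y, rs b y, rs b a, rr]
  by_cases m1 : R x y <;> by_cases m2 : R x a <;> by_cases m3 : R x b <;>
  by_cases m4 : R y a <;> by_cases m5 : R y b <;> by_cases m6 : R a b <;>
  first
  | (exfalso; grind)
  | (simp [m1, m2, m3, m4, m5, m6, indQ_true, indQ_false]; done)
  | (simp [m1, m2, m3, m4, m5, m6, indQ_true, indQ_false]; norm_num; done)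


theorem NCq_isolated [DecidableEq α] (q : α → ℕ) (hq : Function.Injective q) (s : Setoid α)
    (h : NCq q s) (x y : α)
    (hxy : q y = q x + 1 ∨ q x = q y + 1) (hx : ∀ a, s x a → a = x) :
    NCq (fun z => q (Equiv.swap x y z)) s := by
  have key : ∀ u v, u ≠ x → v ≠ x → q (Equiv.swap x y u) < q (Equiv.swap x y v) → q u < q v := by
    intro u v hu hv
    have e : ∀ w, w ≠ x → (w = y ∧ q (Equiv.swap x y w) = q x) ∨
        (q (Equiv.swap x y w) = q w ∧ q w ≠ q x ∧ q w ≠ q y) := by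
      intro w hw
      by_cases hwy : w = y
      · subst hwy; simp
      · right
        rw [Equiv.swap_apply_of_ne_of_ne hw hwy]
        exact ⟨rfl, fun k => hw (hq k), fun k => hwy (hq k)⟩
    rcases e u hu with ⟨rfl, e1⟩ | ⟨e1, e2, e3⟩ <;> rcases e v hv with ⟨rfl, f1⟩ | ⟨f1, f2, f3⟩ <;>
      omega
  intro a b c d h1 h2 h3 h4 h5
  have hac : a ≠ c := by rintro rfl; exact absurd (h1.trans h2) (lt_irrefl _)
  have hbd : b ≠ d := by rintro rfl; exact absurd (h2.trans h3) (lt_irrefl _)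
  have ha : a ≠ x := by rintro rfl; exact hac (hx _ h4).symm
  have hc : c ≠ x := by rintro rfl; exact hac (hx _ (s.symm' h4))
  have hb : b ≠ x := by rintro rfl; exact hbd (hx _ h5).symm
  have hd : d ≠ x := by rintro rfl; exact hbd (hx _ (s.symm' h5))
  exact h a b c d (key _ _ ha hb h1) (key _ _ hb hc h2) (key _ _ hc hd h3) h4 h5

theorem row_aux [Finite α] [DecidableEq α] (q : α → ℕ) (hq : Function.Injective q) (s : Setoid α)
    (h : NCq q s) (x y : α) (hxy : q y = q x + 1) :
    FMat α s ∈ Submodule.span ℚ (FMat α '' {r | NCq (fun z => q (Equiv.swap x y z)) r}) := by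
  have mem : ∀ r, NCq (fun z => q (Equiv.swap x y z)) r →
      FMat α r ∈ Submodule.span ℚ (FMat α '' {r | NCq (fun z => q (Equiv.swap x y z)) r}) :=
    fun r hr => Submodule.subset_span ⟨r, hr, rfl⟩
  have hsw : ∀ r : Setoid α, NCq q r → r x y → NCq (fun z => q (Equiv.swap x y z)) r := by
    intro r hr hrxy
    refine NCq_swap q r hr _ (fun z => ?_)
    rw [Equiv.swap_apply_def]
    split_ifs with h1 h2
    · subst h1; exact r.symm' hrxy
    · subst h2; exact hrxy
    · exact r.refl' z
  have hmm : ∀ r : Setoid α, NCq q r → NCq (fun z => q (Equiv.swap x y z)) (mergeS r x y) :=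
    fun r hr => hsw _ (NCq_merge q hq r hr x y hxy) ((mergeS_le r _ x y).1 le_rfl).2
  by_cases hsxy : s x y
  · exact mem _ (hsw s h hsxy)
  by_cases hx : ∀ a, s x a → a = x
  · exact mem _ (NCq_isolated q hq s h x y (Or.inl hxy) hx)
  by_cases hy : ∀ a, s y a → a = y
  · have := NCq_isolated q hq s h y x (Or.inr hxy) hy
    rw [Equiv.swap_comm] at this
    exact mem _ this
  push Not at hx hy
  obtain ⟨a, hxa, hax⟩ := hx
  obtain ⟨b, hyb, hby⟩ := hy
  have hxny : x ≠ y := fun k => hsxy (k ▸ s.refl' x)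
  have hay : a ≠ y := fun k => hsxy (k ▸ hxa)
  have hbx : b ≠ x := fun k => hsxy (s.symm' (k ▸ hyb))
  have ss := fun {a b} (h : s a b) => s.symm' h
  have st := fun {a b c} (h : s a b) (h' : s b c) => s.trans' h h'
  have sr := fun a => s.refl' a
  have hab : ¬ s a b := fun k => hsxy (st hxa (st k (ss hyb)))
  have hxb : ¬ s x b := fun k => hab (st (ss hxa) k)
  have hya : ¬ s y a := fun k => hab (st (ss k) hyb)
  have i1 : mergeS (mergeS (isoS (isoS s x) y) x a) y b = s := by
    ext u v; simp only [mergeS_iff, isoS_iff]; grind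
  have i2 : mergeS (mergeS (isoS (isoS s x) y) x b) y a = s.comap (Equiv.swap x y) := by
    ext u v
    change _ ↔ s (Equiv.swap x y u) (Equiv.swap x y v)
    rw [Equiv.swap_apply_def, Equiv.swap_apply_def]
    simp only [mergeS_iff, isoS_iff]; grind
  have i3 : mergeS (mergeS (isoS (isoS s x) y) a b) x y =
      mergeS (isoS (isoS (mergeS s x y) x) y) x y := by
    ext u v; simp only [mergeS_iff, isoS_iff]; grind
  have i4 : mergeS (mergeS (isoS (isoS s x) y) x a) a b = isoS (mergeS s x y) y := by
    ext u v; simp only [mergeS_iff, isoS_iff]; grind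
  have i5 : mergeS (mergeS (isoS (isoS s x) y) y b) a b = isoS (mergeS s x y) x := by
    ext u v; simp only [mergeS_iff, isoS_iff]; grind
  have i6 : mergeS (mergeS (isoS (isoS s x) y) x a) x y = mergeS (isoS s y) x y := by
    ext u v; simp only [mergeS_iff, isoS_iff]; grind
  have i7 : mergeS (mergeS (isoS (isoS s x) y) y b) x y = mergeS (isoS s x) x y := by
    ext u v; simp only [mergeS_iff, isoS_iff]; grind
  have rel := FMat_relation (isoS (isoS s x) y) x y a b
    (by simp only [isoS_iff]; grind) (by simp only [isoS_iff]; grind)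
    (by simp only [isoS_iff]; grind) (by simp only [isoS_iff]; grind)
    (by simp only [isoS_iff]; grind) (by simp only [isoS_iff]; grind)
  rw [i1, i2, i3, i4, i5, i6, i7] at rel
  have hM := hmm s h
  rw [rel]
  refine Submodule.sub_mem _ (Submodule.add_mem _ (Submodule.add_mem _ (Submodule.add_mem _
    (Submodule.add_mem _ (Submodule.sub_mem _ (Submodule.neg_mem _ ?_) ?_) ?_) ?_) ?_) ?_) ?_
  · exact mem _ (NCq_comap q s h _)
  · exact mem _ (hmm _ (NCq_iso _ _ _ (NCq_iso _ _ _ (NCq_merge q hq s h x y hxy))))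
  · exact mem _ (NCq_iso _ _ _ hM)
  · exact mem _ (NCq_iso _ _ _ hM)
  · exact mem _ (hmm _ (NCq_iso _ _ _ h))
  · exact mem _ (hmm _ (NCq_iso _ _ _ h))
  · exact mem _ hM

end Helpers

/-- Let `p` be a linear order on `Fin n` (given by its position map) and let `p'`
be the linear order obtained from `p` by swapping the elements occupying two
consecutive positions `i` and `i + 1`. If `π` is a partition of `Fin n` that is
non-crossing with respect to `p`, then the row `F_n[π]` of the forest
compatibility matrix is a `ℚ`-linear combination of rows `F_n[ρ]` indexed by
partitions `ρ` that are non-crossing with respect to `p'`. -/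
theorem row_mem_span_noncrossing_swap (n : ℕ) (hn : 0 < n) (p : Fin n ≃ Fin n)
    (i : ℕ) (hi : i + 1 < n) (π : Setoid (Fin n))
    (hπ : NonCrossingSetoid (ltOfOrder p) π) :
    FMat (Fin n) π ∈ Submodule.span ℚ
      (FMat (Fin n) ''
        {ρ : Setoid (Fin n) |
          NonCrossingSetoid
            (ltOfOrder (p.trans (Equiv.swap ⟨i, by omega⟩ ⟨i + 1, hi⟩))) ρ}) := by
  have key := row_aux (fun z => (p z : ℕ)) (fun u v k => p.injective (Fin.ext k)) π
    ((NC_iff p π).1 hπ) (p.symm ⟨i, by omega⟩) (p.symm ⟨i + 1, hi⟩) (by simp)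
  have e : {r : Setoid (Fin n) | NCq (fun z => (p (Equiv.swap (p.symm ⟨i, by omega⟩)
      (p.symm ⟨i + 1, hi⟩) z) : ℕ)) r} = {ρ : Setoid (Fin n) |
          NonCrossingSetoid
            (ltOfOrder (p.trans (Equiv.swap ⟨i, by omega⟩ ⟨i + 1, hi⟩))) ρ} := by
    ext r
    simp only [Set.mem_ofPred_eq, NC_iff]
    have : ∀ z, p (Equiv.swap (p.symm ⟨i, by omega⟩) (p.symm ⟨i + 1, hi⟩) z) =
        (p.trans (Equiv.swap ⟨i, by omega⟩ ⟨i + 1, hi⟩)) z := by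
      intro z
      rw [Equiv.trans_apply, Equiv.swap_apply_def, Equiv.swap_apply_def]
      simp only [Equiv.eq_symm_apply]
      split_ifs <;> simp
    simp only [this]
  rw [← e]
  exact key
end
end
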